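/- The function f defined by f(x₁,x₂,a) = 1/(x₁ (log x₁)^{3/2}) on {x₁ > 3, |x₂| < 1, e⁻¹ < a < e}, f = c₀ on R₀ = [−1,1]×[−1,1]×[e⁻¹,e], and f = 0 elsewhere (with c₀ chosen so that ∫_G f dρ = 0) has heat maximal function Mf in L¹(ρ), i.e. ‖Mf‖₁ < ∞. -/

import Mathlib

open MeasureTheory Real Filter Set
open scoped ENNReal

noncomputable section

/-- The group `G = ℝ² ⋊ ℝ⁺`, realized as triples `(x₁, x₂, a)` (only `a > 0` is relevant). -/
abbrev G : Type := ℝ × ℝ × ℝ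

/-- Group product `(x₁,x₂,a)·(x₁',x₂',a') = (x₁+a x₁', x₂+a x₂', a a')`. -/
def gMul (x y : G) : G := (x.1 + x.2.2 * y.1, x.2.1 + x.2.2 * y.2.1, x.2.2 * y.2.2)

/-- Group inverse `(x₁,x₂,a)⁻¹ = (−x₁/a, −x₂/a, 1/a)`. -/
def gInv (x : G) : G := (-x.1 / x.2.2, -x.2.1 / x.2.2, 1 / x.2.2)

/-- The identity `e = (0,0,1)`. -/
def gE : G := (0, 0, 1)

/-- The right Haar measure `dρ = a⁻¹ dx₁ dx₂ da` (supported where `a > 0`). -/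
def ρG : Measure G :=
  (volume : Measure G).withDensity fun x => ENNReal.ofReal (if 0 < x.2.2 then x.2.2⁻¹ else 0)

/-- The modular function `δ(x₁,x₂,a) = a⁻²`. -/
def deltaG (x : G) : ℝ := (x.2.2 ^ 2)⁻¹

/-- `|x| = √(x₁² + x₂²)`. -/
def normG (x : G) : ℝ := Real.sqrt (x.1 ^ 2 + x.2.1 ^ 2)

/-- `cosh r(x) = (a + a⁻¹ + a⁻¹|x|²)/2`. -/
def coshArg (x : G) : ℝ := (x.2.2 + x.2.2⁻¹ + x.2.2⁻¹ * (x.1 ^ 2 + x.2.1 ^ 2)) / 2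

/-- `r(x) ≥ 0` is determined by `cosh r(x) = coshArg x`; explicitly `r = arcosh (coshArg x)`. -/
def rG (x : G) : ℝ := Real.log (coshArg x + Real.sqrt (coshArg x ^ 2 - 1))

/-- The left-invariant distance `d(x,y) = r(x⁻¹y)`. -/
def dG (x y : G) : ℝ := rG (gMul (gInv x) y)

/-- The heat kernel
`p_t(x) = (8π^{3/2})⁻¹ δ(x)^{1/2} (r(x)/sinh r(x)) t^{−3/2} exp(−r(x)²/(4t))`,
with `r/sinh r := 1` at `x = e`. -/
def heatK (t : ℝ) (x : G) : ℝ :=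
  (8 * Real.pi ^ ((3 : ℝ)/2))⁻¹ * Real.sqrt (deltaG x) *
    (if rG x = 0 then 1 else rG x / Real.sinh (rG x)) *
    t ^ (-(3 : ℝ)/2) * Real.exp (-(rG x ^ 2) / (4 * t))

/-- Convolution `f ∗ p_t(x) = ∫ f(xy⁻¹) p_t(y) dρ(y)`. -/
def convHeat (f : G → ℝ) (t : ℝ) (x : G) : ℝ := ∫ y, f (gMul x (gInv y)) * heatK t y ∂ρG

/-- The heat maximal operator `Mf(x) = sup_{t>0} |f ∗ p_t(x)|` (valued in `ℝ≥0∞`). -/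
def maxHeat (f : G → ℝ) (x : G) : ℝ≥0∞ :=
  ⨆ (t : ℝ) (_ : 0 < t), ENNReal.ofReal |convHeat f t x|

/-- Calderón–Zygmund sets. -/
def IsCZ (R : Set G) : Prop :=
  ∃ c : G, ∃ L r : ℝ, 0 < c.2.2 ∧ 0 < L ∧ 0 < r ∧
    R = Set.Icc (c.1 - L/2) (c.1 + L/2) ×ˢ
        (Set.Icc (c.2.1 - L/2) (c.2.1 + L/2) ×ˢ
         Set.Icc (c.2.2 * Real.exp (-r)) (c.2.2 * Real.exp r)) ∧
    (r < 1 → Real.exp 2 * c.2.2 * r ≤ L ∧ L < Real.exp 8 * c.2.2 * r) ∧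
    (1 ≤ r → c.2.2 * Real.exp (2*r) ≤ L ∧ L < c.2.2 * Real.exp (8*r))

/-- Atoms: `A ∈ L¹(ρ)` supported in a Calderón–Zygmund set `R`, with
`‖A‖_∞ ≤ ρ(R)⁻¹` and `∫ A dρ = 0`. -/
def IsAtomG (A : G → ℝ) : Prop :=
  Integrable A ρG ∧
  ∃ R : Set G, IsCZ R ∧ (∀ x ∉ R, A x = 0) ∧
    eLpNorm A ⊤ ρG ≤ (ρG R)⁻¹ ∧
    ∫ x, A x ∂ρG = 0

/-- `f = Σ_j lam_j A_j` with atoms `A_j`, `Σ_j |lam_j| < ∞`, converging in `L¹(ρ)`. -/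
def IsH1Decomp (f : G → ℝ) (lam : ℕ → ℝ) (A : ℕ → G → ℝ) : Prop :=
  (∀ j, IsAtomG (A j)) ∧ Summable (fun j => |lam j|) ∧
  Tendsto (fun N => eLpNorm (fun x => f x - ∑ j ∈ Finset.range N, lam j * A j x) 1 ρG)
    atTop (nhds 0)

/-- The Hardy space `H¹`. -/
def MemH1 (f : G → ℝ) : Prop :=
  Integrable f ρG ∧ ∃ lam A, IsH1Decomp f lam A

/-- `‖f‖_{H¹} = inf Σ_j |lam_j|` over all atomic decompositions. -/
def H1norm (f : G → ℝ) : ℝ :=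
  sInf {s | ∃ lam A, IsH1Decomp f lam A ∧ s = ∑' j, |lam j|}

/-- The left-invariant vector field `X₀ = a ∂_a`. -/
def X0 (f : G → ℝ) (x : G) : ℝ := x.2.2 * deriv (fun s => f (x.1, x.2.1, s)) x.2.2

/-- The left-invariant vector field `X₁ = a ∂_{x₁}`. -/
def X1 (f : G → ℝ) (x : G) : ℝ := x.2.2 * deriv (fun s => f (s, x.2.1, x.2.2)) x.1

/-- The left-invariant vector field `X₂ = a ∂_{x₂}`. -/
def X2 (f : G → ℝ) (x : G) : ℝ := x.2.2 * deriv (fun s => f (x.1, s, x.2.2)) x.2.1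

/-- `‖∇p_t(x)‖`, the Euclidean norm of `(X₀p_t, X₁p_t, X₂p_t)` at `x`. -/
def gradHeatNorm (t : ℝ) (x : G) : ℝ :=
  Real.sqrt (X0 (heatK t) x ^ 2 + X1 (heatK t) x ^ 2 + X2 (heatK t) x ^ 2)

/-- The Poisson kernel `q_t(x) = π⁻² δ(x)^{1/2} (r(x)/sinh r(x)) · t/(t²+r(x)²)²`. -/
def poissonK (t : ℝ) (x : G) : ℝ :=
  (Real.pi ^ 2)⁻¹ * Real.sqrt (deltaG x) *
    (if rG x = 0 then 1 else rG x / Real.sinh (rG x)) *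
    (t / (t ^ 2 + rG x ^ 2) ^ 2)

/-- Convolution `f ∗ q_t(x) = ∫ f(xy⁻¹) q_t(y) dρ(y)`. -/
def convPoisson (f : G → ℝ) (t : ℝ) (x : G) : ℝ := ∫ y, f (gMul x (gInv y)) * poissonK t y ∂ρG

/-- The Poisson maximal operator `M̃f(x) = sup_{t>0} |f ∗ q_t(x)|`. -/
def maxPoisson (f : G → ℝ) (x : G) : ℝ≥0∞ :=
  ⨆ (t : ℝ) (_ : 0 < t), ENNReal.ofReal |convPoisson f t x|

/-- `G_{r₁}(x) = sup_{z ∈ B(x,r₁/2)} sup_{t>0} ‖∇p_t(z)‖`. -/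
def Gsup (r1 : ℝ) (x : G) : ℝ≥0∞ :=
  ⨆ (z : G) (_ : 0 < z.2.2 ∧ dG x z < r1 / 2) (t : ℝ) (_ : 0 < t),
    ENNReal.ofReal (gradHeatNorm t z)

/-- `R₀ = [−1,1]×[−1,1]×[e⁻¹,e]`. -/
def R0set : Set G :=
  Set.Icc (-1 : ℝ) 1 ×ˢ (Set.Icc (-1 : ℝ) 1 ×ˢ Set.Icc (Real.exp (-1)) (Real.exp 1))

/-- `R_L = [L−1,L+1]×[−1,1]×[e⁻¹,e]`. -/
def RLset (L : ℝ) : Set G :=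
  Set.Icc (L - 1) (L + 1) ×ˢ (Set.Icc (-1 : ℝ) 1 ×ˢ Set.Icc (Real.exp (-1)) (Real.exp 1))

/-- `f_L = χ_{R_L} − χ_{R₀}`. -/
def fL (L : ℝ) : G → ℝ := fun x =>
  (RLset L).indicator (fun _ => (1 : ℝ)) x - R0set.indicator (fun _ => (1 : ℝ)) x

/-- The mean of `g` over `R` with respect to `ρ`. -/
def czMean (g : G → ℝ) (R : Set G) : ℝ := (∫ x in R, g x ∂ρG) / (ρG R).toReal

/-- `‖g‖_{BMO} = sup_R ρ(R)⁻¹ ∫_R |g − g_R| dρ` over Calderón–Zygmund sets `R`. -/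
def czBMO (g : G → ℝ) : ℝ≥0∞ :=
  ⨆ (R : Set G) (_ : IsCZ R),
    (ρG R)⁻¹ * ∫⁻ x in R, ENNReal.ofReal |g x - czMean g R| ∂ρG

/-- `‖h‖_{BMO(ℝ)} = sup_Q |Q|⁻¹ ∫_Q |h − h_Q|` over bounded intervals `Q ⊂ ℝ`. -/
def lineBMO (h : ℝ → ℝ) : ℝ≥0∞ :=
  ⨆ (a : ℝ) (b : ℝ) (_ : a < b),
    (ENNReal.ofReal (b - a))⁻¹ *
      ∫⁻ s in Set.Icc a b, ENNReal.ofReal |h s - (∫ u in Set.Icc a b, h u) / (b - a)|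

/-- `2R₀ = [−2,2]×[−2,2]×[e⁻²,e²]`. -/
def twoR0set : Set G :=
  Set.Icc (-2 : ℝ) 2 ×ˢ (Set.Icc (-2 : ℝ) 2 ×ˢ Set.Icc (Real.exp (-2)) (Real.exp 2))

/-- The set `{x₁ > 3, |x₂| < 1, e⁻¹ < a < e}`. -/
def domSpecial : Set G :=
  {x : G | 3 < x.1 ∧ |x.2.1| < 1 ∧ Real.exp (-1) < x.2.2 ∧ x.2.2 < Real.exp 1}

/-- The function equal to `1/(x₁ (log x₁)^{3/2})` on `{x₁ > 3, |x₂| < 1, e⁻¹ < a < e}`,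
to `c₀` on `R₀`, and `0` elsewhere. -/
def fSpecial (c0 : ℝ) : G → ℝ := fun x =>
  domSpecial.indicator (fun y => (y.1 * Real.log y.1 ^ ((3 : ℝ)/2))⁻¹) x
    + R0set.indicator (fun _ => c0) x

/-!
Since `∫ f dρ = 0`, any constant may be subtracted from the kernel `K_t(x, y) = p_t(y⁻¹x) δ(y)` of
`f ∗ p_t(x) = ∫ f(y) K_t(x, y) dρ(y)`. The function `f` lives on `|y₂| ≤ 1`, `|log b| ≤ 1` and is
`O(Λ(y₁))` there, where `Λ(s) = 1 / (|s| log^{3/2} |s|)` for large `s`.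

For `y` near `x` the kernel is at most a multiple of a Gaussian in the coordinates
`(y₁, y₂, log b)`, in which `ρ` is Lebesgue measure. This contributes `O(Λ(x₁))` to `Mf(x)`, for `x`
in a bounded neighbourhood of the strip.

Elsewhere `K_t(x, y) ≲ (a² + |x - y|²)⁻¹ d(x, y)⁻²` uniformly in `t`, which just fails to be
integrable in `x`. Writing `L` for `1 + log (1 + |x - y|²)`, it is `L^{2δ}` times an integrable
weight. When `|x|` is at most quadratic in `y₁`, this factor is `O(log^{2δ} |y₁|)`. When `|x|` is
larger, `K_t(x, y) - K_t(x, e)` has better decay. Hence the tail of `Mf` has `L¹` norm at most a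
multiple of `∫ Λ(s) log^{2δ} |s| ds`, which is finite for `δ < 1/4`.
-/

/-- The radial factor `g_t(r) = r t^{-3/2} e^{-r²/(4t)}` of the heat kernel: away from `e`, `p_t` is
`g_t(r(x))` times a factor that does not depend on `t`. -/
def heatProfile (t r : ℝ) : ℝ := r * t ^ (-(3 : ℝ) / 2) * exp (-(r ^ 2) / (4 * t))

section HeatProfile

theorem rpow_neg_three_div_two {t : ℝ} (ht : 0 ≤ t) : t ^ (-(3 : ℝ) / 2) = (√t ^ 3)⁻¹ := by
  rw [sqrt_eq_rpow, ← rpow_natCast, ← rpow_mul ht, ← rpow_neg ht]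
  norm_num

theorem pow_mul_exp_neg_sq_div_four_le (n : ℕ) {u : ℝ} (hu : 0 ≤ u) :
    u ^ n * exp (-(u ^ 2 / 4)) ≤ n.factorial * exp 1 := by
  have hpow : u ^ n ≤ n.factorial * exp u :=
    (div_le_iff₀' (by positivity)).1 (pow_div_factorial_le_exp u hu n)
  have hexp : exp u * exp (-(u ^ 2 / 4)) ≤ exp 1 := by
    rw [← exp_add, exp_le_exp]
    nlinarith [sq_nonneg (u - 2)]
  calc u ^ n * exp (-(u ^ 2 / 4)) ≤ n.factorial * exp u * exp (-(u ^ 2 / 4)) := by gcongr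
    _ = n.factorial * (exp u * exp (-(u ^ 2 / 4))) := mul_assoc ..
    _ ≤ n.factorial * exp 1 := by gcongr

theorem neg_sq_div_eq_scaled (r : ℝ) {t : ℝ} (ht : 0 < t) :
    -(r ^ 2) / (4 * t) = -((r / √t) ^ 2 / 4) := by
  rw [div_pow, sq_sqrt ht.le]
  field_simp

theorem heatProfile_nonneg {t r : ℝ} (ht : 0 ≤ t) (hr : 0 ≤ r) : 0 ≤ heatProfile t r := by
  unfold heatProfile
  positivity

theorem heatProfile_le {t r : ℝ} (ht : 0 < t) (hr : 0 < r) :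
    heatProfile t r ≤ 18 * (r ^ 2)⁻¹ := by
  have hcube := pow_mul_exp_neg_sq_div_four_le 3 (u := r / √t) (by positivity)
  have hconst : (Nat.factorial 3 : ℝ) * exp 1 ≤ 18 := by
    norm_num [Nat.factorial]
    linarith [exp_one_lt_d9]
  calc heatProfile t r
      = (r ^ 2)⁻¹ * ((r / √t) ^ 3 * exp (-((r / √t) ^ 2 / 4))) := by
        rw [heatProfile, rpow_neg_three_div_two ht.le, neg_sq_div_eq_scaled r ht]
        field_simp
    _ ≤ (r ^ 2)⁻¹ * 18 := by gcongr; exact hcube.trans hconst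
    _ = 18 * (r ^ 2)⁻¹ := mul_comm ..

theorem hasDerivAt_heatProfile {t : ℝ} (ht : t ≠ 0) (r : ℝ) :
    HasDerivAt (heatProfile t)
      (t ^ (-(3 : ℝ) / 2) * exp (-(r ^ 2) / (4 * t)) * (1 - r ^ 2 / (2 * t))) r := by
  have hexponent : HasDerivAt (fun r : ℝ => -(r ^ 2) / (4 * t)) (-(2 * r) / (4 * t)) r := by
    simpa using (hasDerivAt_pow 2 r).neg.div_const (4 * t)
  refine (((hasDerivAt_id r).mul_const (t ^ (-(3 : ℝ) / 2))).mul hexponent.exp).congr_deriv ?_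
  simp only [id]
  field_simp
  ring

theorem abs_deriv_heatProfile_le {t r : ℝ} (ht : 0 < t) (hr : 0 < r) :
    |deriv (heatProfile t) r| ≤ 200 * (r ^ 3)⁻¹ := by
  have hcube := pow_mul_exp_neg_sq_div_four_le 3 (u := r / √t) (by positivity)
  have hquint := pow_mul_exp_neg_sq_div_four_le 5 (u := r / √t) (by positivity)
  norm_num [Nat.factorial] at hcube hquint
  have hcube' : 0 ≤ (r / √t) ^ 3 * exp (-((r / √t) ^ 2 / 4)) := by positivity
  have hquint' : 0 ≤ (r / √t) ^ 5 * exp (-((r / √t) ^ 2 / 4)) := by positivity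
  have hderiv : deriv (heatProfile t) r = (r ^ 3)⁻¹ *
      ((r / √t) ^ 3 * exp (-((r / √t) ^ 2 / 4)) -
        (r / √t) ^ 5 * exp (-((r / √t) ^ 2 / 4)) / 2) := by
    have hratio : r ^ 2 / (2 * t) = (r / √t) ^ 2 / 2 := by
      rw [div_pow, sq_sqrt ht.le]
      field_simp
    rw [(hasDerivAt_heatProfile ht.ne' r).deriv, rpow_neg_three_div_two ht.le,
      neg_sq_div_eq_scaled r ht, hratio]
    field_simp
  rw [hderiv, abs_mul, abs_of_pos (by positivity : 0 < (r ^ 3)⁻¹), mul_comm]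
  gcongr
  rw [abs_le]
  constructor <;> linarith [exp_one_lt_d9]

theorem abs_heatProfile_sub_le {t r s : ℝ} (ht : 0 < t) (hr : 0 < r) (hs : 0 < s) :
    |heatProfile t r - heatProfile t s| ≤ 200 * ((r ^ 3)⁻¹ + (s ^ 3)⁻¹) * |r - s| := by
  wlog hrs : r ≤ s generalizing r s
  · rw [abs_sub_comm, abs_sub_comm r s, add_comm]
    exact this hs hr (le_of_not_ge hrs)
  have hmean := (convex_Icc r s).norm_image_sub_le_of_norm_deriv_le
    (f := heatProfile t) (C := 200 * (r ^ 3)⁻¹)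
    (fun x _ => (hasDerivAt_heatProfile ht.ne' x).differentiableAt)
    (fun x hx => (abs_deriv_heatProfile_le ht (hr.trans_le hx.1)).trans (by gcongr; exact hx.1))
    (right_mem_Icc.2 hrs) (left_mem_Icc.2 hrs)
  simp only [norm_eq_abs] at hmean
  refine hmean.trans ?_
  gcongr
  exact le_add_of_nonneg_right (by positivity)

end HeatProfile

section LogarithmicIntegrals

theorem integrableOn_Ioi_deriv_mul_rpow_neg {φ φ' : ℝ → ℝ} {a p : ℝ} (hp : 1 < p)
    (hderiv : ∀ s ∈ Ici a, HasDerivAt φ (φ' s) s) (hpos : ∀ s ∈ Ici a, 0 < φ s)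
    (hderiv_nonneg : ∀ s ∈ Ioi a, 0 ≤ φ' s) (hlim : Tendsto φ atTop atTop) :
    IntegrableOn (fun s => φ' s * φ s ^ (-p)) (Ioi a) := by
  refine integrableOn_Ioi_deriv_of_nonneg' (g := fun s => (1 - p)⁻¹ * φ s ^ (1 - p)) (l := 0)
    (fun s hs => ?_) (fun s hs => ?_) ?_
  · refine (((hderiv s hs).rpow_const (Or.inl (hpos s hs).ne')).const_mul _).congr_deriv ?_
    have : 1 - p ≠ 0 := by linarith
    rw [show 1 - p - 1 = -p by ring]
    field_simp
  · have := hpos s (Ioi_subset_Ici_self hs)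
    have := hderiv_nonneg s hs
    positivity
  · simpa [Function.comp_def] using
      ((tendsto_rpow_neg_atTop (sub_pos.2 hp)).comp hlim).const_mul (1 - p)⁻¹

/-- The logarithmic factor `1 + log (1 + |z|²)` which makes the weight `(1 + |z|²)⁻¹` integrable
over the plane. -/
def planeLog (z : ℝ × ℝ) : ℝ := 1 + log (1 + ‖z‖ ^ 2)

/-- The integrable weight `(1 + |z|²)⁻¹ (1 + log (1 + |z|²))^{-1-δ}` on the plane. -/
def planeWeight (δ : ℝ) (z : ℝ × ℝ) : ℝ := (1 + ‖z‖ ^ 2)⁻¹ * planeLog z ^ (-(1 + δ))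

theorem one_le_planeLog (z : ℝ × ℝ) : 1 ≤ planeLog z :=
  le_add_of_nonneg_right (log_nonneg (le_add_of_nonneg_right (sq_nonneg _)))

theorem measurable_planeWeight (δ : ℝ) : Measurable (planeWeight δ) := by
  unfold planeWeight planeLog
  fun_prop

theorem planeWeight_nonneg (δ : ℝ) (z : ℝ × ℝ) : 0 ≤ planeWeight δ z := by
  have := one_le_planeLog z
  unfold planeWeight
  positivity

theorem lintegral_planeWeight_lt_top {δ : ℝ} (hδ : 0 < δ) :
    ∫⁻ z, ENNReal.ofReal (planeWeight δ z) < ⊤ := by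
  refine Integrable.lintegral_lt_top ((integrable_fun_norm_addHaar volume
    (f := fun s : ℝ => (1 + s ^ 2)⁻¹ * (1 + log (1 + s ^ 2)) ^ (-(1 + δ)))).2 ?_)
  have hlog (s : ℝ) : 0 < 1 + log (1 + s ^ 2) :=
    add_pos_of_pos_of_nonneg one_pos (log_nonneg (le_add_of_nonneg_right (sq_nonneg s)))
  have hradial := integrableOn_Ioi_deriv_mul_rpow_neg (a := 0) (p := 1 + δ)
    (φ := fun s => 1 + log (1 + s ^ 2)) (φ' := fun s => 2 * s / (1 + s ^ 2)) (by linarith)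
    (fun s _ => ?_) (fun s _ => hlog s) (fun s hs => ?_) ?_
  · refine (hradial.const_mul (1 / 2)).congr (ae_of_all _ fun s => ?_)
    simp only [Module.finrank_prod, Module.finrank_self, smul_eq_mul]
    ring
  · have hquad : HasDerivAt (fun s : ℝ => 1 + s ^ 2) (2 * s) s := by
      simpa using (hasDerivAt_pow 2 s).const_add 1
    exact (hquad.log (by positivity)).const_add 1
  · have : 0 < s := hs
    positivity
  · exact tendsto_atTop_add_const_left _ _ (tendsto_log_atTop.comp
      (tendsto_atTop_add_const_left _ _ (tendsto_pow_atTop two_ne_zero)))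

/-- The tail `1 / ((|s| + 3) log (|s| + 3)^p)`, integrable over the line for `p > 1`; the shift by
`3` keeps the logarithm above `1`. -/
def logTail (p s : ℝ) : ℝ := ((|s| + 3) * log (|s| + 3) ^ p)⁻¹

theorem one_lt_log_abs_add_three (s : ℝ) : 1 < log (|s| + 3) := by
  rw [lt_log_iff_exp_lt (by positivity)]
  linarith [exp_one_lt_d9, abs_nonneg s]

theorem logTail_pos (p s : ℝ) : 0 < logTail p s := by
  have := one_lt_log_abs_add_three s
  unfold logTail
  positivity

theorem measurable_logTail (p : ℝ) : Measurable (logTail p) := by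
  unfold logTail
  fun_prop

theorem logTail_mul_rpow (p q s : ℝ) :
    logTail p s * log (|s| + 3) ^ q = logTail (p - q) s := by
  have hlog : 0 < log (|s| + 3) := one_pos.trans (one_lt_log_abs_add_three s)
  rw [logTail, logTail, rpow_sub hlog]
  field_simp

theorem lintegral_logTail_lt_top {p : ℝ} (hp : 1 < p) :
    ∫⁻ s, ENNReal.ofReal (logTail p s) < ⊤ := by
  have hlog {s : ℝ} (hs : 0 ≤ s) : 0 < log (s + 3) := log_pos (by linarith)
  refine Integrable.lintegral_lt_top ((integrable_fun_norm_addHaar volume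
    (f := fun s : ℝ => ((s + 3) * log (s + 3) ^ p)⁻¹)).2 ?_)
  have hradial := integrableOn_Ioi_deriv_mul_rpow_neg (a := 0) (φ := fun s => log (s + 3))
    (φ' := fun s => 1 / (s + 3)) hp
    (fun s hs => ((hasDerivAt_id s).add_const 3).log (by simp only [mem_Ici, id] at *; linarith))
    (fun s hs => hlog hs) (fun s hs => ?_)
    (tendsto_log_atTop.comp (tendsto_atTop_add_const_right _ _ tendsto_id))
  · refine hradial.congr_fun (fun s hs => ?_) measurableSet_Ioi
    simp [rpow_neg (hlog (le_of_lt hs)).le, mul_comm]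
  · have : 0 < s := hs
    positivity

theorem logTail_le_of_le {p u v : ℝ} (hp : 0 ≤ p) (huv : |u| + 3 ≤ 2 * (|v| + 3)) :
    logTail p v ≤ 2 ^ (1 + p) * logTail p u := by
  have hlu := one_lt_log_abs_add_three u
  have hlv := one_lt_log_abs_add_three v
  have hlog : log (|u| + 3) ≤ 2 * log (|v| + 3) := by
    have := log_le_log (by positivity) huv
    rw [log_mul (by norm_num) (by positivity)] at this
    linarith [log_two_lt_d9]
  have hpow : log (|u| + 3) ^ p ≤ 2 ^ p * log (|v| + 3) ^ p := by
    rw [← mul_rpow (by norm_num) (by linarith)]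
    gcongr
  rw [logTail, logTail, ← div_eq_mul_inv, inv_eq_one_div,
    div_le_div_iff₀ (by positivity) (by positivity)]
  calc 1 * ((|u| + 3) * log (|u| + 3) ^ p)
      ≤ 1 * (2 * (|v| + 3) * (2 ^ p * log (|v| + 3) ^ p)) := by gcongr
    _ = 2 ^ (1 + p) * ((|v| + 3) * log (|v| + 3) ^ p) := by
      rw [rpow_add two_pos, rpow_one]
      ring

end LogarithmicIntegrals

section HaarMeasure

theorem lintegral_comp_sub_smul {E : Type*} [NormedAddCommGroup E] [NormedSpace ℝ E]
    [MeasurableSpace E] [BorelSpace E] [FiniteDimensional ℝ E] (μ : Measure E)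
    [μ.IsAddHaarMeasure] {f : E → ℝ≥0∞} (hf : Measurable f) (v : E) {r : ℝ} (hr : r ≠ 0) :
    ∫⁻ z, f (v - r • z) ∂μ = ENNReal.ofReal |(r ^ Module.finrank ℝ E)⁻¹| * ∫⁻ z, f z ∂μ := by
  rw [← lintegral_sub_left_eq_self f v, ← smul_eq_mul, ← lintegral_smul_measure,
    ← Measure.map_addHaar_smul μ hr, lintegral_map (by fun_prop) (by fun_prop)]

theorem lintegral_inv_mul_eq_lintegral_exp (F : ℝ → ℝ≥0∞) :
    ∫⁻ b, ENNReal.ofReal (if 0 < b then b⁻¹ else 0) * F b = ∫⁻ s, F (exp s) := by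
  have hset : ∫⁻ b, ENNReal.ofReal (if 0 < b then b⁻¹ else 0) * F b
      = ∫⁻ b in range exp, ENNReal.ofReal b⁻¹ * F b := by
    rw [range_exp, ← lintegral_indicator measurableSet_Ioi]
    congr 1 with b
    by_cases hb : 0 < b <;> simp [hb]
  rw [hset, ← image_univ, lintegral_image_eq_lintegral_abs_deriv_mul MeasurableSet.univ
    (fun x _ => (hasDerivAt_exp x).hasDerivWithinAt) exp_injective.injOn, setLIntegral_univ]
  congr 1 with s
  rw [← mul_assoc, ← ENNReal.ofReal_mul (abs_nonneg _), abs_of_pos (exp_pos s),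
    mul_inv_cancel₀ (exp_pos s).ne', ENNReal.ofReal_one, one_mul]

theorem measurable_density_ρG :
    Measurable fun x : G => ENNReal.ofReal (if 0 < x.2.2 then x.2.2⁻¹ else 0) :=
  ENNReal.measurable_ofReal.comp (Measurable.ite (measurableSet_lt (by fun_prop) (by fun_prop))
    (by fun_prop) measurable_const)

instance : SFinite ρG := by
  unfold ρG
  infer_instance

theorem lintegral_ρG {F : G → ℝ≥0∞} (hF : Measurable F) :
    ∫⁻ y, F y ∂ρG = ∫⁻ s, ∫⁻ z : ℝ × ℝ, F (z.1, z.2, exp s) := by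
  have hintegrand := measurable_density_ρG.mul hF
  rw [ρG, lintegral_withDensity_eq_lintegral_mul _ measurable_density_ρG hF,
    ← volume_preserving_prodAssoc.lintegral_comp hintegrand, Measure.volume_eq_prod (ℝ × ℝ) ℝ,
    lintegral_prod_symm _
      (by exact (hintegrand.comp MeasurableEquiv.prodAssoc.measurable).aemeasurable),
    ← lintegral_inv_mul_eq_lintegral_exp fun b => ∫⁻ z : ℝ × ℝ, F (z.1, z.2, b)]
  congr 1 with b
  exact lintegral_const_mul' (ENNReal.ofReal (if 0 < b then b⁻¹ else 0))
    (fun z : ℝ × ℝ => F (z.1, z.2, b)) ENNReal.ofReal_ne_top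

theorem ae_ρG_height_pos : ∀ᵐ y ∂ρG, 0 < y.2.2 := by
  rw [ρG, ae_withDensity_iff measurable_density_ρG]
  refine ae_of_all _ fun y hy => ?_
  by_contra hneg
  simp [hneg] at hy

theorem measurable_deltaG : Measurable deltaG := by
  unfold deltaG
  fun_prop

theorem measurable_gMul_gInv (x : G) : Measurable fun y => gMul x (gInv y) := by
  unfold gMul gInv
  fun_prop

theorem lintegral_comp_gMul_gInv {x : G} (hx : 0 < x.2.2) {F : G → ℝ≥0∞} (hF : Measurable F) :
    ∫⁻ y, F (gMul x (gInv y)) ∂ρG = ∫⁻ y, ENNReal.ofReal (deltaG y) * F y ∂ρG := by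
  have hdelta := measurable_deltaG
  rw [lintegral_ρG (by exact hF.comp (measurable_gMul_gInv x)), lintegral_ρG (by fun_prop),
    ← lintegral_sub_left_eq_self _ (log x.2.2)]
  congr 1 with s
  have hslice : Measurable fun z : ℝ × ℝ => F (z.1, z.2, exp s) := by fun_prop
  have hcoord (z : ℝ × ℝ) : gMul x (gInv (z.1, z.2, exp (log x.2.2 - s)))
      = (((x.1, x.2.1) - exp s • z).1, ((x.1, x.2.1) - exp s • z).2, exp s) := by
    have := exp_pos s
    simp only [gMul, gInv, exp_sub, exp_log hx, Prod.fst_sub, Prod.snd_sub, Prod.smul_fst,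
      Prod.smul_snd, smul_eq_mul, Prod.mk.injEq]
    refine ⟨?_, ?_, ?_⟩ <;> field_simp <;> ring
  simp only [hcoord]
  rw [lintegral_comp_sub_smul volume hslice _ (exp_pos s).ne', ← lintegral_const_mul _ hslice]
  simp [deltaG, abs_of_pos (exp_pos s)]

theorem map_gMul_gInv_ρG {x : G} (hx : 0 < x.2.2) :
    ρG.map (fun y => gMul x (gInv y)) = ρG.withDensity fun y => ENNReal.ofReal (deltaG y) := by
  refine Measure.ext_of_lintegral _ fun F hF => ?_
  rw [lintegral_map hF (measurable_gMul_gInv x), lintegral_comp_gMul_gInv hx hF,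
    lintegral_withDensity_eq_lintegral_mul _ measurable_deltaG.ennreal_ofReal hF]
  rfl

end HaarMeasure

/-- The kernel of `f ↦ f ∗ p_t` with respect to `ρ`: `f ∗ p_t(x) = ∫ f(y) p_t(y⁻¹x) δ(y) dρ(y)`. -/
def convKernel (t : ℝ) (x y : G) : ℝ := heatK t (gMul (gInv y) x) * deltaG y

theorem measurable_heatK (t : ℝ) : Measurable (heatK t) := by
  have hr : Measurable rG := by
    unfold rG coshArg
    fun_prop
  have hratio : Measurable fun x => if rG x = 0 then (1 : ℝ) else rG x / sinh (rG x) :=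
    Measurable.ite (hr (measurableSet_singleton 0)) measurable_const
      (hr.div (measurable_sinh.comp hr))
  have hdelta := measurable_deltaG
  unfold heatK
  fun_prop

theorem measurable_heatK_gInv_gMul (t : ℝ) (x : G) :
    Measurable fun y => heatK t (gMul (gInv y) x) := by
  refine (measurable_heatK t).comp ?_
  unfold gMul gInv
  fun_prop

theorem measurable_convKernel (t : ℝ) (x : G) : Measurable (convKernel t x) :=
  (measurable_heatK_gInv_gMul t x).mul measurable_deltaG

theorem convHeat_eq_integral_convKernel {f : G → ℝ} (hf : Measurable f) (t : ℝ) {x : G}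
    (hx : 0 < x.2.2) : convHeat f t x = ∫ y, f y * convKernel t x y ∂ρG := by
  have hcancel : convHeat f t x = ∫ y, (fun z => f z * heatK t (gMul (gInv z) x))
      (gMul x (gInv y)) ∂ρG := by
    refine integral_congr_ae ?_
    filter_upwards [ae_ρG_height_pos] with y hy
    have : gMul (gInv (gMul x (gInv y))) x = y := by
      unfold gMul gInv
      ext <;> simp only <;> field_simp <;> ring
    simp only [this]
  rw [hcancel, ← integral_map (f := fun z => f z * heatK t (gMul (gInv z) x))
      (measurable_gMul_gInv x).aemeasurable
      (by exact (hf.mul (measurable_heatK_gInv_gMul t x)).aestronglyMeasurable),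
    map_gMul_gInv_ρG hx,
    integral_withDensity_eq_integral_toReal_smul measurable_deltaG.ennreal_ofReal (by simp)]
  congr 1 with y
  rw [ENNReal.toReal_ofReal (by unfold deltaG; positivity), convKernel, smul_eq_mul]
  ring

section Strip

/-- The strip `ℝ × [-n, n] × [e⁻ⁿ, eⁿ]`. The functions under study live on the strip of size `1`. -/
def strip (n : ℝ) : Set G := univ ×ˢ (Icc (-n) n ×ˢ Icc (exp (-n)) (exp n))

theorem measurableSet_strip (n : ℝ) : MeasurableSet (strip n) :=
  MeasurableSet.univ.prod (measurableSet_Icc.prod measurableSet_Icc)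

theorem mem_strip {n : ℝ} {x : G} :
    x ∈ strip n ↔ |x.2.1| ≤ n ∧ exp (-n) ≤ x.2.2 ∧ x.2.2 ≤ exp n := by
  rw [strip, mem_prod, mem_prod, abs_le]
  simp only [mem_univ, mem_Icc, true_and]

theorem height_pos_of_mem_strip {n : ℝ} {x : G} (hx : x ∈ strip n) : 0 < x.2.2 :=
  (exp_pos _).trans_le (mem_strip.1 hx).2.1

theorem abs_log_height_le_of_mem_strip {n : ℝ} {x : G} (hx : x ∈ strip n) :
    |log x.2.2| ≤ n := by
  have hpos := height_pos_of_mem_strip hx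
  obtain ⟨-, hlo, hhi⟩ := mem_strip.1 hx
  exact abs_le.2 ⟨(le_log_iff_exp_le hpos).2 hlo, (log_le_iff_le_exp hpos).2 hhi⟩

theorem setLIntegral_strip (n : ℝ) {F : ℝ → ℝ≥0∞} (hF : Measurable F) :
    ∫⁻ y in strip n, F y.1 ∂ρG
      = ENNReal.ofReal (2 * n) * ((∫⁻ u, F u) * ENNReal.ofReal (2 * n)) := by
  have hone : Measurable ((Icc (-n) n).indicator (1 : ℝ → ℝ≥0∞)) :=
    measurable_one.indicator measurableSet_Icc
  have hvol : ∫⁻ u, (Icc (-n) n).indicator 1 u = ENNReal.ofReal (2 * n) := by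
    rw [lintegral_indicator_one measurableSet_Icc, volume_Icc, sub_neg_eq_add, two_mul]
  have hsplit (s : ℝ) (z : ℝ × ℝ) : (strip n).indicator (fun y => F y.1) (z.1, z.2, exp s)
      = (Icc (-n) n).indicator 1 s * (F z.1 * (Icc (-n) n).indicator 1 z.2) := by
    simp only [strip, indicator_apply, mem_prod, mem_univ, mem_Icc, true_and, exp_le_exp,
      Pi.one_apply]
    split_ifs <;> simp_all
  rw [← lintegral_indicator (measurableSet_strip n),
    lintegral_ρG ((by fun_prop : Measurable fun y : G => F y.1).indicator (measurableSet_strip n))]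
  simp only [hsplit]
  have hinner : Measurable fun z : ℝ × ℝ => F z.1 * (Icc (-n) n).indicator 1 z.2 := by fun_prop
  simp only [lintegral_const_mul _ hinner]
  rw [lintegral_mul_const _ hone, hvol, Measure.volume_eq_prod,
    lintegral_prod_mul hF.aemeasurable hone.aemeasurable, hvol]

theorem setLIntegral_strip_lt_top (n : ℝ) {F : ℝ → ℝ≥0∞} (hF : Measurable F)
    (hint : ∫⁻ u, F u < ⊤) : ∫⁻ y in strip n, F y.1 ∂ρG < ⊤ := by
  rw [setLIntegral_strip n hF]
  exact ENNReal.mul_lt_top ENNReal.ofReal_lt_top (ENNReal.mul_lt_top hint ENNReal.ofReal_lt_top)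

end Strip

section Distance

/-- The projection `(x₁, x₂, a) ↦ (x₁, x₂)` onto the plane. -/
def planar (x : G) : ℝ × ℝ := (x.1, x.2.1)

/-- The polynomial `a² + b² + |x - y|²`, equal to `2ab cosh d(x, y)`. -/
def distQuad (x y : G) : ℝ :=
  x.2.2 ^ 2 + y.2.2 ^ 2 + ((x.1 - y.1) ^ 2 + (x.2.1 - y.2.1) ^ 2)

/-- The factor `ab sinh d(x, y)` whose inverse is the part of the kernel of `f ↦ f ∗ p_t` that does
not depend on `t`. -/
def sinhQuad (x y : G) : ℝ := x.2.2 * y.2.2 * sinh (dG x y)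

/-- The constant `(8π^{3/2})⁻¹` of the heat kernel. -/
def heatConst : ℝ := (8 * Real.pi ^ ((3 : ℝ) / 2))⁻¹

theorem heatConst_pos : 0 < heatConst := by
  unfold heatConst
  positivity

variable {x y : G}

theorem distQuad_pos (hx : 0 < x.2.2) : 0 < distQuad x y := by
  unfold distQuad
  positivity

theorem coshArg_gInv_gMul (hx : 0 < x.2.2) (hy : 0 < y.2.2) :
    coshArg (gMul (gInv x) y) = distQuad x y / (2 * (x.2.2 * y.2.2)) := by
  simp only [coshArg, gMul, gInv, distQuad]
  field_simp
  ring

theorem distQuad_div_eq_cosh_add (hx : 0 < x.2.2) (hy : 0 < y.2.2) :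
    distQuad x y / (2 * (x.2.2 * y.2.2)) = cosh (log x.2.2 - log y.2.2)
      + ((x.1 - y.1) ^ 2 + (x.2.1 - y.2.1) ^ 2) / (2 * (x.2.2 * y.2.2)) := by
  rw [cosh_eq, neg_sub, exp_sub, exp_sub, exp_log hx, exp_log hy, distQuad]
  field_simp

theorem cosh_log_sub_log_le (hx : 0 < x.2.2) (hy : 0 < y.2.2) :
    cosh (log x.2.2 - log y.2.2) ≤ distQuad x y / (2 * (x.2.2 * y.2.2)) := by
  rw [distQuad_div_eq_cosh_add hx hy]
  exact le_add_of_nonneg_right (by positivity)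

theorem one_le_distQuad_div (hx : 0 < x.2.2) (hy : 0 < y.2.2) :
    1 ≤ distQuad x y / (2 * (x.2.2 * y.2.2)) :=
  (one_le_cosh _).trans (cosh_log_sub_log_le hx hy)

theorem dG_eq_arcosh (hx : 0 < x.2.2) (hy : 0 < y.2.2) :
    dG x y = arcosh (distQuad x y / (2 * (x.2.2 * y.2.2))) := by
  rw [dG, rG, coshArg_gInv_gMul hx hy, arcosh]

theorem cosh_dG (hx : 0 < x.2.2) (hy : 0 < y.2.2) :
    cosh (dG x y) = distQuad x y / (2 * (x.2.2 * y.2.2)) := by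
  rw [dG_eq_arcosh hx hy, cosh_arcosh (one_le_distQuad_div hx hy)]

theorem dG_nonneg (hx : 0 < x.2.2) (hy : 0 < y.2.2) : 0 ≤ dG x y := by
  rw [dG_eq_arcosh hx hy]
  exact arcosh_nonneg (one_le_distQuad_div hx hy)

theorem dG_comm (hx : 0 < x.2.2) (hy : 0 < y.2.2) : dG x y = dG y x := by
  rw [dG_eq_arcosh hx hy, dG_eq_arcosh hy hx]
  unfold distQuad
  ring_nf

theorem distQuad_eq (hx : 0 < x.2.2) (hy : 0 < y.2.2) :
    distQuad x y = 2 * (x.2.2 * y.2.2) * cosh (dG x y) := by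
  rw [cosh_dG hx hy]
  field_simp

theorem sinhQuad_sq (hx : 0 < x.2.2) (hy : 0 < y.2.2) :
    sinhQuad x y ^ 2 = distQuad x y ^ 2 / 4 - (x.2.2 * y.2.2) ^ 2 := by
  rw [sinhQuad, mul_pow, sinh_sq, distQuad_eq hx hy]
  ring

theorem sinhQuad_pos (hx : 0 < x.2.2) (hy : 0 < y.2.2) (hd : 0 < dG x y) : 0 < sinhQuad x y :=
  mul_pos (mul_pos hx hy) (sinh_pos_iff.2 hd)

theorem abs_log_sub_log_le_dG (hx : 0 < x.2.2) (hy : 0 < y.2.2) :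
    |log x.2.2 - log y.2.2| ≤ dG x y := by
  rw [← abs_of_nonneg (dG_nonneg hx hy), ← cosh_le_cosh, cosh_dG hx hy]
  exact cosh_log_sub_log_le hx hy

theorem log_distQuad_eq (hx : 0 < x.2.2) (hy : 0 < y.2.2) :
    log (distQuad x y) = log 2 + (log x.2.2 + log y.2.2) + log (cosh (dG x y)) := by
  rw [distQuad_eq hx hy, log_mul (by positivity) (cosh_pos _).ne', log_mul two_ne_zero
    (by positivity), log_mul hx.ne' hy.ne']

theorem log_distQuad_le (hx : 0 < x.2.2) (hy : 0 < y.2.2) :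
    log (distQuad x y) ≤ log 2 + (log x.2.2 + log y.2.2) + dG x y := by
  rw [log_distQuad_eq hx hy]
  gcongr
  rw [log_le_iff_le_exp (cosh_pos _), ← cosh_add_sinh]
  exact le_add_of_nonneg_right (sinh_nonneg_iff.2 (dG_nonneg hx hy))

theorem le_log_distQuad (hx : 0 < x.2.2) (hy : 0 < y.2.2) :
    log x.2.2 + log y.2.2 + dG x y ≤ log (distQuad x y) := by
  rw [log_distQuad_eq hx hy]
  have : dG x y ≤ log 2 + log (cosh (dG x y)) := by
    rw [← log_mul two_ne_zero (cosh_pos _).ne', le_log_iff_exp_le (by positivity), ← cosh_add_sinh]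
    linarith [sinh_lt_cosh (x := dG x y)]
  linarith

theorem sqrt_deltaG_mul_deltaG (hx : 0 < x.2.2) (hy : 0 < y.2.2) :
    √(deltaG (gMul (gInv y) x)) * deltaG y = (x.2.2 * y.2.2)⁻¹ := by
  have hquot : deltaG (gMul (gInv y) x) = (y.2.2 / x.2.2) ^ 2 := by
    simp only [deltaG, gMul, gInv]
    field_simp
  rw [hquot, sqrt_sq (by positivity), deltaG]
  field_simp

theorem convKernel_eq (t : ℝ) (hx : 0 < x.2.2) (hy : 0 < y.2.2) :
    convKernel t x y = heatConst * (x.2.2 * y.2.2)⁻¹ *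
      (if dG x y = 0 then 1 else dG x y / sinh (dG x y)) *
      t ^ (-(3 : ℝ) / 2) * exp (-(dG x y ^ 2) / (4 * t)) := by
  rw [convKernel, heatK, ← dG, dG_comm hx hy, ← sqrt_deltaG_mul_deltaG hx hy, heatConst]
  ring

theorem convKernel_eq_mul_heatProfile (t : ℝ) (hx : 0 < x.2.2) (hy : 0 < y.2.2)
    (hd : 0 < dG x y) :
    convKernel t x y = heatConst * (sinhQuad x y)⁻¹ * heatProfile t (dG x y) := by
  rw [convKernel_eq t hx hy, if_neg hd.ne', sinhQuad, heatProfile, mul_inv _ (sinh _)]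
  ring

theorem convKernel_nonneg {t : ℝ} (ht : 0 ≤ t) (hx : 0 < x.2.2) (hy : 0 < y.2.2) :
    0 ≤ convKernel t x y := by
  have hd := dG_nonneg hx hy
  have := sinh_nonneg_iff.2 hd
  have := heatConst_pos
  rw [convKernel_eq t hx hy]
  split_ifs <;> positivity

theorem convKernel_le {t : ℝ} (ht : 0 ≤ t) (hx : 0 < x.2.2) (hy : 0 < y.2.2) :
    convKernel t x y ≤ heatConst * (x.2.2 * y.2.2)⁻¹ *
      (t ^ (-(3 : ℝ) / 2) * exp (-(dG x y ^ 2) / (4 * t))) := by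
  have hd := dG_nonneg hx hy
  have := heatConst_pos
  have hratio : (if dG x y = 0 then 1 else dG x y / sinh (dG x y)) ≤ 1 := by
    split_ifs
    · exact le_rfl
    · exact div_le_one_of_le₀ (self_le_sinh_iff.2 hd) (sinh_nonneg_iff.2 hd)
  rw [convKernel_eq t hx hy, mul_assoc _ (t ^ _)]
  exact mul_le_mul_of_nonneg_right (mul_le_of_le_one_right (by positivity) hratio) (by positivity)

end Distance

section Nonlocal

/-- The factor `1 + |log a|` which makes the weight `da / a` integrable over the heights. -/
def heightLog (a : ℝ) : ℝ := 1 + |log a|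

/-- The weight, integrable in `x` uniformly in `y`, that dominates the nonlocal part of the
kernel. -/
def decayWeight (δ : ℝ) (x y : G) : ℝ :=
  heightLog x.2.2 ^ (-(1 + δ)) * planeWeight δ (planar x - planar y)

/-- The points `y` close to `x`, when `x` lies in the strip of size `2`; away from this set the
distance from `x` to the strip of size `1` is bounded below. -/
def localSet (x : G) : Set G := {y | x ∈ strip 2 ∧ |x.1 - y.1| ≤ 1}

theorem one_le_heightLog (a : ℝ) : 1 ≤ heightLog a := le_add_of_nonneg_right (abs_nonneg _)

theorem decayWeight_nonneg (δ : ℝ) (x y : G) : 0 ≤ decayWeight δ x y := by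
  have := one_le_heightLog x.2.2
  have := planeWeight_nonneg δ (planar x - planar y)
  unfold decayWeight
  positivity

variable {x y : G}

theorem norm_planar_sub_sq_le (x y : G) :
    ‖planar x - planar y‖ ^ 2 ≤ (x.1 - y.1) ^ 2 + (x.2.1 - y.2.1) ^ 2 := by
  rw [Prod.norm_def, norm_eq_abs, norm_eq_abs]
  simp only [planar, Prod.mk_sub_mk]
  rcases max_choice |x.1 - y.1| |x.2.1 - y.2.1| with h | h <;> rw [h, sq_abs] <;>
    nlinarith [sq_nonneg (x.1 - y.1), sq_nonneg (x.2.1 - y.2.1)]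

theorem one_add_norm_planar_sub_sq_le (hy : y ∈ strip 1) :
    1 + ‖planar x - planar y‖ ^ 2 ≤ exp 2 * distQuad x y := by
  have hheight : 1 ≤ exp 2 * y.2.2 ^ 2 := by
    have : 1 ≤ exp 1 * y.2.2 := by
      simpa [← exp_add] using mul_le_mul_of_nonneg_left (mem_strip.1 hy).2.1 (exp_pos 1).le
    rw [show (2 : ℝ) = 1 + 1 by norm_num, exp_add]
    nlinarith
  have hexp : 1 ≤ exp 2 := one_le_exp (by norm_num)
  have hnorm := norm_planar_sub_sq_le x y
  unfold distQuad
  nlinarith [sq_nonneg x.2.2, mul_nonneg (exp_pos 2).le (sq_nonneg x.2.2),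
    sq_nonneg (x.1 - y.1), sq_nonneg (x.2.1 - y.2.1)]

theorem heightLog_le (hx : 0 < x.2.2) (hy : y ∈ strip 1) : heightLog x.2.2 ≤ dG x y + 2 := by
  have hdist := abs_log_sub_log_le_dG hx (height_pos_of_mem_strip hy)
  have hlog := abs_log_height_le_of_mem_strip hy
  have := abs_sub_abs_le_abs_sub (log x.2.2) (log y.2.2)
  unfold heightLog
  linarith

theorem planeLog_le (hx : 0 < x.2.2) (hy : y ∈ strip 1) :
    planeLog (planar x - planar y) ≤ 2 * dG x y + 6 := by
  have hlog : log (1 + ‖planar x - planar y‖ ^ 2) ≤ 2 + log (distQuad x y) := by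
    rw [← log_exp 2, ← log_mul (exp_ne_zero _) (distQuad_pos hx).ne']
    exact log_le_log (by positivity) (by simpa using one_add_norm_planar_sub_sq_le hy)
  have hquad := log_distQuad_le hx (height_pos_of_mem_strip hy)
  have hheight := heightLog_le hx hy
  have hlogy := abs_log_height_le_of_mem_strip hy
  unfold heightLog at hheight
  unfold planeLog
  linarith [le_abs_self (log x.2.2), le_abs_self (log y.2.2), log_two_lt_d9]

theorem mem_strip_iff_abs_log {n : ℝ} (hx : 0 < x.2.2) :
    x ∈ strip n ↔ |x.2.1| ≤ n ∧ |log x.2.2| ≤ n := by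
  rw [mem_strip, abs_le (a := log _), le_log_iff_exp_le hx, log_le_iff_le_exp hx]

theorem one_le_planar_sq_of_nonlocal (hx : 0 < x.2.2) (hlog : |log x.2.2| ≤ 2)
    (hy : y ∈ strip 1 \ localSet x) : 1 ≤ (x.1 - y.1) ^ 2 + (x.2.1 - y.2.1) ^ 2 := by
  by_cases hstrip : |x.2.1| ≤ 2
  · have hfst : 1 < |x.1 - y.1| :=
      not_le.1 fun h => hy.2 ⟨(mem_strip_iff_abs_log hx).2 ⟨hstrip, hlog⟩, h⟩
    exact le_add_of_le_of_nonneg ((one_le_sq_iff_one_le_abs _).2 hfst.le) (sq_nonneg _)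
  · have hsnd : 1 ≤ |x.2.1 - y.2.1| := by
      linarith [abs_sub_abs_le_abs_sub x.2.1 y.2.1, (mem_strip.1 hy.1).1]
    exact le_add_of_nonneg_of_le (sq_nonneg _) ((one_le_sq_iff_one_le_abs _).2 hsnd)

theorem one_add_le_cosh_dG_of_nonlocal (hx : 0 < x.2.2) (hy : y ∈ strip 1 \ localSet x) :
    1 + (2 * exp 3)⁻¹ ≤ cosh (dG x y) := by
  have hypos := height_pos_of_mem_strip hy.1
  have hlogy := abs_log_height_le_of_mem_strip hy.1
  rw [cosh_dG hx hypos, distQuad_div_eq_cosh_add hx hypos]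
  by_cases hlog : |log x.2.2| ≤ 2
  · have hheights : x.2.2 * y.2.2 ≤ exp 3 := by
      rw [← exp_log hx, ← exp_log hypos, ← exp_add, exp_le_exp]
      linarith [le_abs_self (log x.2.2), le_abs_self (log y.2.2)]
    rw [← one_div]
    gcongr
    exacts [one_le_cosh _, one_le_planar_sq_of_nonlocal hx hlog hy]
  · have hsub : |(1 : ℝ)| ≤ |log x.2.2 - log y.2.2| := by
      rw [abs_one]
      linarith [abs_sub_abs_le_abs_sub (log x.2.2) (log y.2.2)]
    have hcosh : 1 + 1 / 8 ≤ cosh 1 := by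
      rw [cosh_eq]
      linarith [exp_one_gt_d9, exp_pos (-1)]
    have hexp : (2 * exp 3)⁻¹ ≤ 1 / 8 := by
      rw [← one_div]
      gcongr
      linarith [add_one_le_exp (3 : ℝ)]
    have : 0 ≤ ((x.1 - y.1) ^ 2 + (x.2.1 - y.2.1) ^ 2) / (2 * (x.2.2 * y.2.2)) := by positivity
    linarith [cosh_le_cosh.2 hsub]

theorem exists_pos_le_dG_of_nonlocal :
    ∃ c > 0, ∀ x y : G, 0 < x.2.2 → y ∈ strip 1 \ localSet x → c ≤ dG x y := by
  have hone : 1 < 1 + (2 * exp 3)⁻¹ := lt_add_of_pos_right _ (by positivity)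
  refine ⟨arcosh (1 + (2 * exp 3)⁻¹), arcosh_pos hone, fun x y hx hy => ?_⟩
  have hcosh := one_add_le_cosh_dG_of_nonlocal hx hy
  rwa [← cosh_arcosh hone.le, cosh_le_cosh, abs_of_nonneg (arcosh_nonneg hone.le),
    abs_of_nonneg (dG_nonneg hx (height_pos_of_mem_strip hy.1))] at hcosh

theorem exists_weights_le_of_nonlocal :
    ∃ C > 0, ∀ x y : G, 0 < x.2.2 → y ∈ strip 1 \ localSet x →
      0 < dG x y ∧ heightLog x.2.2 ≤ C * dG x y ∧
      planeLog (planar x - planar y) ≤ C * dG x y ∧ distQuad x y ≤ C * sinhQuad x y := by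
  obtain ⟨c, hc, hdist⟩ := exists_pos_le_dG_of_nonlocal
  have hsinhc := sinh_pos_iff.2 hc
  refine ⟨2 + 6 / c + 2 / sinh c, by positivity, fun x y hx hy => ?_⟩
  have hypos := height_pos_of_mem_strip hy.1
  have hd := hdist x y hx hy
  have hdpos := hc.trans_le hd
  have hone : 6 ≤ 6 / c * dG x y := by
    rw [div_mul_eq_mul_div, le_div_iff₀ hc]
    gcongr
  have hrest : 0 ≤ 2 / sinh c * dG x y := by positivity
  refine ⟨hdpos, by linarith [heightLog_le hx hy.1], by linarith [planeLog_le hx hy.1], ?_⟩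
  have hsinh : sinh c ≤ sinh (dG x y) := sinh_le_sinh.2 hd
  have hcosh : cosh (dG x y) ≤ (1 + 1 / sinh c) * sinh (dG x y) := by
    have : 1 ≤ 1 / sinh c * sinh (dG x y) := by rwa [one_div_mul_eq_div, one_le_div hsinhc]
    linarith [cosh_sub_sinh (dG x y), exp_le_one_iff.2 (neg_nonpos.2 hdpos.le)]
  calc distQuad x y = 2 * (x.2.2 * y.2.2) * cosh (dG x y) := distQuad_eq hx hypos
    _ ≤ 2 * (x.2.2 * y.2.2) * ((1 + 1 / sinh c) * sinh (dG x y)) := by gcongr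
    _ = (2 + 2 / sinh c) * sinhQuad x y := by
      rw [sinhQuad]
      ring
    _ ≤ (2 + 6 / c + 2 / sinh c) * sinhQuad x y := by
      have := (sinhQuad_pos hx hypos hdpos).le
      gcongr
      exact le_add_of_nonneg_right (by positivity)

theorem rpow_neg_add_le_mul {u v C d p q : ℝ} (hu : 0 < u) (hv : 0 < v) (hd : 0 < d) (hC : 0 < C)
    (hp : 0 ≤ p) (hq : 0 ≤ q) (hud : u ≤ C * d) (hvd : v ≤ C * d) :
    d ^ (-(p + q)) ≤ C ^ (p + q) * (u ^ (-p) * v ^ (-q)) := by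
  have hsplit : d ^ (-(p + q)) = C ^ (p + q) * ((C * d) ^ (-p) * (C * d) ^ (-q)) := by
    rw [← rpow_add (by positivity), ← neg_add, mul_rpow hC.le hd.le, ← mul_assoc, ← rpow_add hC,
      add_neg_cancel, rpow_zero, one_mul]
  rw [hsplit]
  gcongr ?_ * (?_ * ?_)
  exacts [rpow_le_rpow_of_nonpos hu hud (neg_nonpos.2 hp),
    rpow_le_rpow_of_nonpos hv hvd (neg_nonpos.2 hq)]

theorem inv_distQuad_mul_inv_dG_pow_le {δ B : ℝ} {n : ℕ} (hδ : 0 ≤ δ) (hn : 1 + δ ≤ n)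
    (hx : 0 < x.2.2) (hy : y ∈ strip 1) (hB : 0 < B) (hd : 0 < dG x y)
    (hheight : heightLog x.2.2 ≤ B * dG x y)
    (hplane : planeLog (planar x - planar y) ≤ B * dG x y) :
    (distQuad x y)⁻¹ * (dG x y ^ n)⁻¹ ≤
      exp 2 * B ^ n * (planeLog (planar x - planar y) ^ (2 + 2 * δ - n) * decayWeight δ x y) := by
  have hH := one_pos.trans_le (one_le_heightLog x.2.2)
  have hP := one_pos.trans_le (one_le_planeLog (planar x - planar y))
  have hquad : (distQuad x y)⁻¹ ≤ exp 2 * (1 + ‖planar x - planar y‖ ^ 2)⁻¹ := by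
    rw [← div_eq_mul_inv, le_div_iff₀ (by positivity), inv_mul_le_iff₀ (distQuad_pos hx), mul_comm]
    exact one_add_norm_planar_sub_sq_le hy
  have hdist : (dG x y ^ n)⁻¹ ≤ B ^ n * (heightLog x.2.2 ^ (-(1 + δ)) *
      planeLog (planar x - planar y) ^ (-(n - (1 + δ)))) := by
    have := rpow_neg_add_le_mul (p := 1 + δ) (q := n - (1 + δ)) hH hP hd hB (by linarith)
      (by linarith) hheight hplane
    rw [add_sub_cancel, rpow_neg hd.le] at this
    simpa only [rpow_natCast] using this
  have hsplit : planeLog (planar x - planar y) ^ (-(n - (1 + δ)))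
      = planeLog (planar x - planar y) ^ (2 + 2 * δ - n)
        * planeLog (planar x - planar y) ^ (-(1 + δ)) := by
    rw [← rpow_add hP]
    ring_nf
  calc (distQuad x y)⁻¹ * (dG x y ^ n)⁻¹
      ≤ exp 2 * (1 + ‖planar x - planar y‖ ^ 2)⁻¹ * (B ^ n * (heightLog x.2.2 ^ (-(1 + δ)) *
          planeLog (planar x - planar y) ^ (-(n - (1 + δ))))) := by gcongr
    _ = _ := by
      rw [hsplit, decayWeight, planeWeight]
      ring

/-- The two kernel bounds correspond to the size `g_t(d) ≲ d⁻²` of the radial profile and to its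
derivative `g_t'(d) ≲ d⁻³`. -/
theorem exists_decay_bounds_of_nonlocal {δ : ℝ} (hδ : 0 ≤ δ) (hδ' : δ ≤ 1 / 2) :
    ∃ C > 0, ∀ x y : G, 0 < x.2.2 → y ∈ strip 1 \ localSet x →
      0 < dG x y ∧ distQuad x y ≤ C * sinhQuad x y ∧
      (distQuad x y)⁻¹ * (dG x y ^ 2)⁻¹
        ≤ C * (planeLog (planar x - planar y) ^ (2 * δ) * decayWeight δ x y) ∧
      (distQuad x y)⁻¹ * (dG x y ^ 3)⁻¹ ≤ C * decayWeight δ x y := by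
  obtain ⟨B, hB, hweights⟩ := exists_weights_le_of_nonlocal
  refine ⟨B + exp 2 * B ^ 2 + exp 2 * B ^ 3, by positivity, fun x y hx hy => ?_⟩
  obtain ⟨hd, hheight, hplane, hquad⟩ := hweights x y hx hy
  have hS := sinhQuad_pos hx (height_pos_of_mem_strip hy.1) hd
  have hP := one_le_planeLog (planar x - planar y)
  have hdw := decayWeight_nonneg δ x y
  have hB2 : 0 ≤ exp 2 * B ^ 2 := by positivity
  have hB3 : 0 ≤ exp 2 * B ^ 3 := by positivity
  refine ⟨hd, hquad.trans (by gcongr; linarith), ?_, ?_⟩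
  · have := inv_distQuad_mul_inv_dG_pow_le (n := 2) hδ (by norm_num; linarith) hx hy.1 hB hd
      hheight hplane
    rw [Nat.cast_two, add_sub_cancel_left] at this
    refine this.trans ?_
    gcongr
    linarith
  · refine (inv_distQuad_mul_inv_dG_pow_le (n := 3) hδ (by norm_num; linarith) hx hy.1 hB hd
      hheight hplane).trans ?_
    gcongr ?_ * ?_
    · linarith
    · exact mul_le_of_le_one_left hdw (rpow_le_one_of_one_le_of_nonpos hP (by norm_num; linarith))

end Nonlocal

section Tail

/-- Fourth root of `2a cosh d(x, e)`, the linear scale in which the far region is expressed. -/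
def planeScale (x : G) : ℝ := √√(distQuad x gE)

/-- The region where `|x|` is so large, quadratically in `y₁`, that `p_t(y⁻¹x)` and `p_t(x)`
nearly cancel. -/
def IsFar (x y : G) : Prop := (|y.1| + 8) ^ 2 ≤ ‖planar x‖

variable {x y : G}

theorem gE_mem_strip_one : gE ∈ strip 1 :=
  mem_strip.2 ⟨by simp [gE], by simp [gE], by simp [gE]⟩

theorem planar_gE : planar gE = 0 := rfl

theorem planeScale_pow_four (x : G) : planeScale x ^ 4 = distQuad x gE := by
  have : 0 ≤ distQuad x gE := by
    unfold distQuad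
    positivity
  rw [planeScale, show 4 = 2 * 2 from rfl, pow_mul, sq_sqrt (sqrt_nonneg _), sq_sqrt this]

theorem norm_planar_le (x : G) : ‖planar x‖ ≤ planeScale x ^ 2 := by
  refine (sq_le_sq₀ (norm_nonneg _) (sq_nonneg _)).1 ?_
  rw [← pow_mul, planeScale_pow_four]
  have := norm_planar_sub_sq_le x gE
  rw [planar_gE, sub_zero] at this
  exact this.trans (le_add_of_nonneg_left (by positivity))

theorem IsFar.abs_fst_add_le (h : IsFar x y) : |y.1| + 8 ≤ planeScale x :=
  (sq_le_sq₀ (by positivity) (sqrt_nonneg _)).1 (h.trans (norm_planar_le x))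

theorem IsFar.isFar_gE (h : IsFar x y) : IsFar x gE := by
  refine le_trans ?_ h
  gcongr (?_ + _) ^ _
  simp [gE]

theorem IsFar.notMem_localSet (h : IsFar x y) : y ∉ localSet x := by
  rintro ⟨hstrip, hfst⟩
  have hnorm : ‖planar x‖ ≤ |y.1| + 2 :=
    max_le (by rw [planar, norm_eq_abs]; linarith [abs_sub_abs_le_abs_sub x.1 y.1])
      ((mem_strip.1 hstrip).1.trans (le_add_of_nonneg_left (abs_nonneg _)))
  unfold IsFar at h
  nlinarith [abs_nonneg y.1]

theorem abs_height_sq_sub_one_le (hy : y ∈ strip 1) : |y.2.2 ^ 2 - 1| ≤ 8 := by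
  have hpos := height_pos_of_mem_strip hy
  have : y.2.2 ≤ 3 := (mem_strip.1 hy).2.2.trans (by linarith [exp_one_lt_d9])
  rw [abs_le]
  constructor <;> nlinarith

theorem IsFar.abs_distQuad_sub_le (h : IsFar x y) (hy : y ∈ strip 1) :
    |distQuad x y - distQuad x gE| ≤ 2 * planeScale x ^ 3 := by
  have hscale := h.abs_fst_add_le
  have hfst : |x.1| ≤ planeScale x ^ 2 := (le_max_left ..).trans (norm_planar_le x)
  have hsnd : |x.2.1| ≤ planeScale x ^ 2 := (le_max_right ..).trans (norm_planar_le x)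
  have hysnd := (mem_strip.1 hy).1
  have hprod1 : |x.1 * y.1| ≤ planeScale x ^ 2 * (planeScale x - 8) := by
    rw [abs_mul]
    gcongr
    linarith
  have hprod2 : |x.2.1 * y.2.1| ≤ planeScale x ^ 2 * 1 := by
    rw [abs_mul]
    gcongr
  have hsq1 : y.1 ^ 2 ≤ (planeScale x - 8) ^ 2 := sq_le_sq.2 (le_abs.2 (.inl (by linarith)))
  have hsq2 : y.2.1 ^ 2 ≤ 1 := (sq_le_one_iff_abs_le_one _).2 hysnd
  have hheight := abs_le.1 (abs_height_sq_sub_one_le hy)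
  have hlarge : 8 ≤ planeScale x := by linarith [abs_nonneg y.1]
  have hdiff : distQuad x y - distQuad x gE = (y.2.2 ^ 2 - 1) + (y.1 ^ 2 - 2 * (x.1 * y.1))
      + (y.2.1 ^ 2 - 2 * (x.2.1 * y.2.1)) := by
    simp only [distQuad, gE]
    ring
  rw [abs_le] at hprod1 hprod2 ⊢
  rw [hdiff]
  constructor <;> nlinarith [sq_nonneg y.1, sq_nonneg y.2.1]

theorem IsFar.two_mul_planeScale_pow_three_le (h : IsFar x y) :
    2 * planeScale x ^ 3 ≤ distQuad x gE / 4 := by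
  have hlarge : 8 ≤ planeScale x := by linarith [abs_nonneg y.1, h.abs_fst_add_le]
  rw [← planeScale_pow_four, pow_succ _ 3]
  have := pow_pos ((by norm_num : (0 : ℝ) < 8).trans_le hlarge) 3
  nlinarith

theorem IsFar.distQuad_gE_le (h : IsFar x y) (hy : y ∈ strip 1) :
    distQuad x gE ≤ 2 * distQuad x y := by
  linarith [abs_le.1 (h.abs_distQuad_sub_le hy), h.two_mul_planeScale_pow_three_le]

theorem IsFar.distQuad_le (h : IsFar x y) (hy : y ∈ strip 1) :
    distQuad x y ≤ 2 * distQuad x gE := by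
  linarith [abs_le.1 (h.abs_distQuad_sub_le hy), h.two_mul_planeScale_pow_three_le]

theorem IsFar.abs_dG_sub_le (h : IsFar x y) (hx : 0 < x.2.2) (hy : y ∈ strip 1) :
    |dG x y - dG x gE| ≤ 3 := by
  have hypos := height_pos_of_mem_strip hy
  have hepos := height_pos_of_mem_strip gE_mem_strip_one
  have hlogy := abs_le.1 (abs_log_height_le_of_mem_strip hy)
  have hloge : log gE.2.2 = 0 := log_one
  have hQ := distQuad_pos (y := y) hx
  have hQe := distQuad_pos (y := gE) hx
  have hup := log_le_log hQ (h.distQuad_le hy)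
  have hlo := log_le_log hQe (h.distQuad_gE_le hy)
  rw [log_mul two_ne_zero hQe.ne'] at hup
  rw [log_mul two_ne_zero hQ.ne'] at hlo
  rw [abs_le]
  constructor <;> linarith [log_distQuad_le hx hypos, log_distQuad_le hx hepos,
    le_log_distQuad hx hypos, le_log_distQuad hx hepos, log_two_lt_d9]

theorem IsFar.abs_sinhQuad_sq_sub_le (h : IsFar x y) (hx : 0 < x.2.2) (hy : y ∈ strip 1) :
    |sinhQuad x gE ^ 2 - sinhQuad x y ^ 2| ≤ 3 * planeScale x ^ 7 := by
  have hlarge : 8 ≤ planeScale x := by linarith [abs_nonneg y.1, h.abs_fst_add_le]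
  have hQ := distQuad_pos (y := y) hx
  have hQe := distQuad_pos (y := gE) hx
  have hxsq : x.2.2 ^ 2 ≤ planeScale x ^ 4 := by
    rw [planeScale_pow_four, distQuad, add_assoc]
    exact le_add_of_nonneg_right (by positivity)
  have hsum : distQuad x y + distQuad x gE ≤ 3 * planeScale x ^ 4 := by
    rw [planeScale_pow_four]
    linarith [h.distQuad_le hy]
  have hdiff : sinhQuad x gE ^ 2 - sinhQuad x y ^ 2 = x.2.2 ^ 2 * (y.2.2 ^ 2 - 1)
      - (distQuad x y - distQuad x gE) * (distQuad x y + distQuad x gE) / 4 := by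
    rw [sinhQuad_sq hx (height_pos_of_mem_strip hy),
      sinhQuad_sq hx (height_pos_of_mem_strip gE_mem_strip_one)]
    simp only [gE]
    ring
  calc |sinhQuad x gE ^ 2 - sinhQuad x y ^ 2|
      ≤ x.2.2 ^ 2 * |y.2.2 ^ 2 - 1| + |distQuad x y - distQuad x gE| *
          (distQuad x y + distQuad x gE) / 4 := by
        rw [hdiff]
        refine (abs_sub _ _).trans_eq ?_
        rw [abs_mul, abs_div, abs_mul, abs_of_nonneg (sq_nonneg x.2.2),
          abs_of_pos (add_pos hQ hQe), abs_of_pos (four_pos (α := ℝ))]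
    _ ≤ planeScale x ^ 4 * 8 + 2 * planeScale x ^ 3 * (3 * planeScale x ^ 4) / 4 := by
        gcongr
        exacts [abs_height_sq_sub_one_le hy, h.abs_distQuad_sub_le hy]
    _ ≤ 3 * planeScale x ^ 7 := by
        have : 8 ≤ planeScale x ^ 3 := by nlinarith [pow_le_pow_left₀ (by norm_num) hlarge 3]
        nlinarith [pow_pos ((by norm_num : (0 : ℝ) < 8).trans_le hlarge) 4]

theorem IsFar.abs_inv_sinhQuad_sub_le {C : ℝ} (h : IsFar x y) (hx : 0 < x.2.2)
    (hy : y ∈ strip 1) (hC : 0 < C) (hS : distQuad x y ≤ C * sinhQuad x y)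
    (hSe : distQuad x gE ≤ C * sinhQuad x gE) :
    |(sinhQuad x y)⁻¹ - (sinhQuad x gE)⁻¹| ≤ 6 * C ^ 3 * (distQuad x gE)⁻¹ / planeScale x := by
  have hscale : 0 < planeScale x := by linarith [abs_nonneg y.1, h.abs_fst_add_le]
  have := distQuad_pos (y := gE) hx
  have hlow : planeScale x ^ 4 / (2 * C) ≤ sinhQuad x y := by
    rw [planeScale_pow_four, div_le_iff₀ (by positivity)]
    linarith [h.distQuad_gE_le hy]
  have hlowe : planeScale x ^ 4 / C ≤ sinhQuad x gE := by
    rw [planeScale_pow_four, div_le_iff₀ hC]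
    linarith
  have hpos : 0 < sinhQuad x y := lt_of_lt_of_le (by positivity) hlow
  have hpose : 0 < sinhQuad x gE := lt_of_lt_of_le (by positivity) hlowe
  have hquot : (sinhQuad x y)⁻¹ - (sinhQuad x gE)⁻¹ = (sinhQuad x gE ^ 2 - sinhQuad x y ^ 2) /
      (sinhQuad x y * (sinhQuad x gE * (sinhQuad x gE + sinhQuad x y))) := by
    field_simp
    ring
  calc |(sinhQuad x y)⁻¹ - (sinhQuad x gE)⁻¹|
      = |sinhQuad x gE ^ 2 - sinhQuad x y ^ 2| /
          (sinhQuad x y * (sinhQuad x gE * (sinhQuad x gE + sinhQuad x y))) := by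
        rw [hquot, abs_div, abs_of_pos (a := _ * _) (by positivity)]
    _ ≤ 3 * planeScale x ^ 7 /
          (planeScale x ^ 4 / (2 * C) * (planeScale x ^ 4 / C * (planeScale x ^ 4 / C))) := by
        gcongr
        exacts [h.abs_sinhQuad_sq_sub_le hx hy, hlowe.trans (le_add_of_nonneg_right hpos.le)]
    _ = 6 * C ^ 3 * (distQuad x gE)⁻¹ / planeScale x := by
        rw [← planeScale_pow_four]
        field_simp
        norm_num

theorem IsFar.planeLog_rpow_le {p : ℝ} (h : IsFar x y) (hp : p ≤ 1) :
    planeLog (planar x - planar gE) ^ p ≤ 4 * planeScale x := by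
  have hlarge : 8 ≤ planeScale x := by linarith [abs_nonneg y.1, h.abs_fst_add_le]
  have hnorm : 1 + ‖planar x‖ ^ 2 ≤ 2 * planeScale x ^ 4 := by
    nlinarith [pow_le_pow_left₀ (norm_nonneg _) (norm_planar_le x) 2,
      pow_le_pow_left₀ (by norm_num) hlarge 4]
  have hlog := log_le_log (by positivity) hnorm
  rw [log_mul two_ne_zero (by positivity), log_pow] at hlog
  refine (rpow_le_rpow_of_exponent_le (one_le_planeLog _) hp).trans ?_
  rw [rpow_one, planar_gE, sub_zero, planeLog]
  push_cast at hlog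
  linarith [log_le_sub_one_of_pos ((by norm_num : (0 : ℝ) < 8).trans_le hlarge), log_two_lt_d9]

theorem inv_sinhQuad_le {C : ℝ} (hx : 0 < x.2.2) (hy : 0 < y.2.2) (hd : 0 < dG x y)
    (hS : distQuad x y ≤ C * sinhQuad x y) : (sinhQuad x y)⁻¹ ≤ C * (distQuad x y)⁻¹ := by
  rwa [← div_eq_mul_inv, le_div_iff₀ (distQuad_pos hx), inv_mul_le_iff₀ (sinhQuad_pos hx hy hd),
    mul_comm]

theorem abs_convKernel_sub_le {t : ℝ} (ht : 0 < t) (hx : 0 < x.2.2) (hy : 0 < y.2.2)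
    (hd : 0 < dG x y) (hde : 0 < dG x gE) :
    |convKernel t x y - convKernel t x gE| ≤ heatConst *
      (|(sinhQuad x y)⁻¹ - (sinhQuad x gE)⁻¹| * (18 * (dG x gE ^ 2)⁻¹) + (sinhQuad x y)⁻¹ *
        (200 * ((dG x y ^ 3)⁻¹ + (dG x gE ^ 3)⁻¹) * |dG x y - dG x gE|)) := by
  have hS := sinhQuad_pos hx hy hd
  have hprofile := heatProfile_nonneg ht.le hde.le
  have hsplit : convKernel t x y - convKernel t x gE = heatConst *
      (((sinhQuad x y)⁻¹ - (sinhQuad x gE)⁻¹) * heatProfile t (dG x gE) +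
        (sinhQuad x y)⁻¹ * (heatProfile t (dG x y) - heatProfile t (dG x gE))) := by
    rw [convKernel_eq_mul_heatProfile t hx hy hd,
      convKernel_eq_mul_heatProfile t hx (height_pos_of_mem_strip gE_mem_strip_one) hde]
    ring
  rw [hsplit, abs_mul, abs_of_pos heatConst_pos]
  refine mul_le_mul_of_nonneg_left ((abs_add_le _ _).trans ?_) heatConst_pos.le
  rw [abs_mul, abs_mul, abs_of_nonneg hprofile, abs_of_pos (inv_pos.2 hS)]
  gcongr
  exacts [heatProfile_le ht hde, abs_heatProfile_sub_le ht hd hde]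

theorem IsFar.inv_distQuad_div_planeScale_le {δ B : ℝ} (h : IsFar x y) (hδ : δ ≤ 1 / 2)
    (hB : 0 ≤ B) (hsize : (distQuad x gE)⁻¹ * (dG x gE ^ 2)⁻¹
      ≤ B * (planeLog (planar x - planar gE) ^ (2 * δ) * decayWeight δ x gE)) :
    (distQuad x gE)⁻¹ / planeScale x * (dG x gE ^ 2)⁻¹ ≤ 4 * B * decayWeight δ x gE := by
  have hscale : 0 < planeScale x := by linarith [abs_nonneg y.1, h.abs_fst_add_le]
  have hweight := decayWeight_nonneg δ x gE
  rw [div_mul_eq_mul_div, div_le_iff₀ hscale]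
  calc (distQuad x gE)⁻¹ * (dG x gE ^ 2)⁻¹
      ≤ B * (planeLog (planar x - planar gE) ^ (2 * δ) * decayWeight δ x gE) := hsize
    _ ≤ B * (4 * planeScale x * decayWeight δ x gE) := by
      gcongr
      exact h.planeLog_rpow_le (by linarith)
    _ = 4 * B * decayWeight δ x gE * planeScale x := by ring

/-- The cancellation estimate: the loss `planeLog ^ (2δ)` in the size bound of the kernel is
absorbed by the gain `1 / planeScale`. -/
theorem exists_abs_convKernel_sub_le_of_isFar {δ : ℝ} (hδ : 0 ≤ δ) (hδ' : δ ≤ 1 / 2) :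
    ∃ C > 0, ∀ t > 0, ∀ x y : G, 0 < x.2.2 → y ∈ strip 1 → IsFar x y →
      |convKernel t x y - convKernel t x gE| ≤ C * (decayWeight δ x gE + decayWeight δ x y) := by
  obtain ⟨B, hB, hbounds⟩ := exists_decay_bounds_of_nonlocal hδ hδ'
  refine ⟨heatConst * (432 * B ^ 4 + 1200 * B ^ 2), by have := heatConst_pos; positivity,
    fun t ht x y hx hy hfar => ?_⟩
  obtain ⟨hd, hS, -, hcube⟩ := hbounds x y hx ⟨hy, hfar.notMem_localSet⟩
  obtain ⟨hde, hSe, hsqe, hcubee⟩ :=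
    hbounds x gE hx ⟨gE_mem_strip_one, hfar.isFar_gE.notMem_localSet⟩
  have hypos := height_pos_of_mem_strip hy
  have hQ := distQuad_pos (y := y) hx
  have hQe := distQuad_pos (y := gE) hx
  have hw := decayWeight_nonneg δ x y
  have hsize : 6 * B ^ 3 * (distQuad x gE)⁻¹ / planeScale x * (18 * (dG x gE ^ 2)⁻¹)
      ≤ 432 * B ^ 4 * decayWeight δ x gE := by
    have := mul_le_mul_of_nonneg_left (hfar.inv_distQuad_div_planeScale_le hδ' hB.le hsqe)
      (by positivity : 0 ≤ 108 * B ^ 3)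
    exact Eq.trans_le (by ring) (this.trans_eq (by ring))
  have hvariation : (distQuad x y)⁻¹ * ((dG x y ^ 3)⁻¹ + (dG x gE ^ 3)⁻¹)
      ≤ 2 * B * (decayWeight δ x gE + decayWeight δ x y) := by
    have hQinv : (distQuad x y)⁻¹ ≤ 2 * (distQuad x gE)⁻¹ := by
      rw [← div_eq_mul_inv, le_div_iff₀ hQe, inv_mul_le_iff₀ hQ, mul_comm]
      exact hfar.distQuad_gE_le hy
    have := mul_le_mul_of_nonneg_right hQinv (by positivity : 0 ≤ (dG x gE ^ 3)⁻¹)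
    nlinarith
  have hSinv := inv_sinhQuad_le hx hypos hd hS
  rw [mul_assoc]
  refine (abs_convKernel_sub_le ht hx hypos hd hde).trans
    (mul_le_mul_of_nonneg_left ?_ heatConst_pos.le)
  calc _ ≤ 6 * B ^ 3 * (distQuad x gE)⁻¹ / planeScale x * (18 * (dG x gE ^ 2)⁻¹) +
        B * (distQuad x y)⁻¹ * (200 * ((dG x y ^ 3)⁻¹ + (dG x gE ^ 3)⁻¹) * 3) := by
        gcongr
        exacts [hfar.abs_inv_sinhQuad_sub_le hx hy hB hS hSe, hfar.abs_dG_sub_le hx hy]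
    _ ≤ _ := by nlinarith [mul_nonneg (pow_nonneg hB.le 4) hw]

/-- The part of `y ↦ p_t(y⁻¹x) δ(y)` that is treated by size and cancellation instead of by a
Gaussian bound. -/
def tailKernel (t : ℝ) (x y : G) : ℝ := (localSet x)ᶜ.indicator (convKernel t x) y

theorem exists_abs_tailKernel_le {δ : ℝ} (hδ : 0 ≤ δ) (hδ' : δ ≤ 1 / 2) :
    ∃ C > 0, ∀ t > 0, ∀ x y : G, 0 < x.2.2 → y ∈ strip 1 → |tailKernel t x y|
      ≤ C * (planeLog (planar x - planar y) ^ (2 * δ) * decayWeight δ x y) := by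
  obtain ⟨B, hB, hbounds⟩ := exists_decay_bounds_of_nonlocal hδ hδ'
  have hconst := heatConst_pos
  refine ⟨heatConst * B * 18 * B, by positivity, fun t ht x y hx hy => ?_⟩
  have hw := decayWeight_nonneg δ x y
  have hP := one_pos.trans_le (one_le_planeLog (planar x - planar y))
  by_cases hloc : y ∈ localSet x
  · rw [tailKernel, indicator_of_notMem (by simpa using hloc), abs_zero]
    positivity
  obtain ⟨hd, hS, hsq, -⟩ := hbounds x y hx ⟨hy, hloc⟩
  have hypos := height_pos_of_mem_strip hy
  have hQ := distQuad_pos (y := y) hx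
  have hprofile := heatProfile_nonneg ht.le hd.le
  rw [tailKernel, indicator_of_mem (by simpa using hloc),
    abs_of_nonneg (convKernel_nonneg ht.le hx hypos)]
  calc convKernel t x y = heatConst * (sinhQuad x y)⁻¹ * heatProfile t (dG x y) :=
        convKernel_eq_mul_heatProfile t hx hypos hd
    _ ≤ heatConst * (B * (distQuad x y)⁻¹) * (18 * (dG x y ^ 2)⁻¹) := by
        gcongr
        exacts [inv_sinhQuad_le hx hypos hd hS, heatProfile_le ht hd]
    _ = heatConst * B * 18 * ((distQuad x y)⁻¹ * (dG x y ^ 2)⁻¹) := by ring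
    _ ≤ heatConst * B * 18 *
          (B * (planeLog (planar x - planar y) ^ (2 * δ) * decayWeight δ x y)) := by gcongr
    _ = _ := by ring

theorem planeLog_rpow_le_of_norm_le {p s : ℝ} (hp : 0 ≤ p) (hp' : p ≤ 1) {z : ℝ × ℝ}
    (hz : ‖z‖ ≤ 2 * (|s| + 8) ^ 2) : planeLog z ^ p ≤ 17 * log (|s| + 3) ^ p := by
  have hlog := one_lt_log_abs_add_three s
  have hs := abs_nonneg s
  have hnorm : 1 + ‖z‖ ^ 2 ≤ 5 * (3 * (|s| + 3)) ^ 4 := by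
    have hbase : ‖z‖ ≤ 2 * (3 * (|s| + 3)) ^ 2 := hz.trans (by gcongr; linarith)
    nlinarith [pow_le_pow_left₀ (norm_nonneg z) hbase 2,
      one_le_pow₀ (by linarith : 1 ≤ 3 * (|s| + 3)) (n := 4)]
  have hbound : planeLog z ≤ 17 * log (|s| + 3) := by
    have := log_le_log (by positivity) hnorm
    rw [log_mul (by norm_num) (by positivity), log_pow, log_mul (by norm_num) (by positivity)]
      at this
    push_cast at this
    unfold planeLog
    linarith [log_le_sub_one_of_pos (by norm_num : (0 : ℝ) < 5),
      log_le_sub_one_of_pos (by norm_num : (0 : ℝ) < 3)]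
  calc planeLog z ^ p ≤ (17 * log (|s| + 3)) ^ p :=
        rpow_le_rpow (zero_le_one.trans (one_le_planeLog z)) hbound hp
    _ = 17 ^ p * log (|s| + 3) ^ p := mul_rpow (by norm_num) (by linarith)
    _ ≤ 17 * log (|s| + 3) ^ p := by
        gcongr
        exact rpow_le_self_of_one_le (by norm_num) hp'

theorem planeLog_rpow_le_of_not_isFar {p : ℝ} (hp : 0 ≤ p) (hp' : p ≤ 1) (hy : y ∈ strip 1)
    (hfar : ¬IsFar x y) :
    planeLog (planar x - planar y) ^ p ≤ 17 * log (|y.1| + 3) ^ p ∧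
      planeLog (planar x - planar gE) ^ p ≤ 17 * log (|y.1| + 3) ^ p := by
  have hx : ‖planar x‖ ≤ (|y.1| + 8) ^ 2 := (not_le.1 hfar).le
  have hynorm : ‖planar y‖ ≤ (|y.1| + 8) ^ 2 :=
    max_le (by rw [planar, norm_eq_abs]; nlinarith [abs_nonneg y.1])
      ((mem_strip.1 hy).1.trans (by nlinarith [abs_nonneg y.1]))
  refine ⟨planeLog_rpow_le_of_norm_le hp hp' ((norm_sub_le _ _).trans (by linarith)),
    planeLog_rpow_le_of_norm_le hp hp' ?_⟩
  rw [planar_gE, sub_zero]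
  linarith [norm_nonneg (planar x)]

theorem exists_abs_tailKernel_sub_le {δ : ℝ} (hδ : 0 ≤ δ) (hδ' : δ ≤ 1 / 2) :
    ∃ C > 0, ∀ t > 0, ∀ x y : G, 0 < x.2.2 → y ∈ strip 1 →
      |tailKernel t x y - tailKernel t x gE|
        ≤ C * (log (|y.1| + 3) ^ (2 * δ) * (decayWeight δ x gE + decayWeight δ x y)) := by
  obtain ⟨A, hA, hcancel⟩ := exists_abs_convKernel_sub_le_of_isFar hδ hδ'
  obtain ⟨B, hB, hsize⟩ := exists_abs_tailKernel_le hδ hδ'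
  refine ⟨A + 17 * B, by positivity, fun t ht x y hx hy => ?_⟩
  have hw := decayWeight_nonneg δ x y
  have hwe := decayWeight_nonneg δ x gE
  have hlog : 1 ≤ log (|y.1| + 3) ^ (2 * δ) :=
    one_le_rpow (one_lt_log_abs_add_three _).le (by positivity)
  have := one_pos.trans_le hlog
  rw [add_mul]
  by_cases hfar : IsFar x y
  · rw [tailKernel, tailKernel, indicator_of_mem hfar.notMem_localSet,
      indicator_of_mem hfar.isFar_gE.notMem_localSet]
    refine (hcancel t ht x y hx hy hfar).trans (le_add_of_le_of_nonneg ?_ (by positivity))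
    gcongr
    exact le_mul_of_one_le_left (by positivity) hlog
  · obtain ⟨hplane, hplanee⟩ :=
      planeLog_rpow_le_of_not_isFar (by positivity) (by linarith : 2 * δ ≤ 1) hy hfar
    refine le_add_of_nonneg_of_le (by positivity) ?_
    calc _ ≤ |tailKernel t x y| + |tailKernel t x gE| := abs_sub _ _
      _ ≤ B * (planeLog (planar x - planar y) ^ (2 * δ) * decayWeight δ x y) +
          B * (planeLog (planar x - planar gE) ^ (2 * δ) * decayWeight δ x gE) :=
        add_le_add (hsize t ht x y hx hy) (hsize t ht x gE hx gE_mem_strip_one)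
      _ ≤ B * (17 * log (|y.1| + 3) ^ (2 * δ) * decayWeight δ x y) +
          B * (17 * log (|y.1| + 3) ^ (2 * δ) * decayWeight δ x gE) := by gcongr
      _ = _ := by ring

end Tail

section Local

open ProbabilityTheory NNReal

/-- The Gaussian density of variance `v` about `x` in the coordinates `(y₁, y₂, log b)`, in which
`ρ` is Lebesgue measure. -/
def gaussianG (x : G) (v : ℝ≥0) (y : G) : ℝ :=
  gaussianPDFReal (log x.2.2) v (log y.2.2) *
    (gaussianPDFReal x.1 v y.1 * gaussianPDFReal x.2.1 v y.2.1)

variable {x y : G}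

theorem lintegral_gaussianG (x : G) {v : ℝ≥0} (hv : v ≠ 0) :
    ∫⁻ y, ENNReal.ofReal (gaussianG x v y) ∂ρG = 1 := by
  have hfactor (s : ℝ) (z : ℝ × ℝ) : ENNReal.ofReal (gaussianG x v (z.1, z.2, exp s))
      = gaussianPDF (log x.2.2) v s * (gaussianPDF x.1 v z.1 * gaussianPDF x.2.1 v z.2) := by
    rw [gaussianG, log_exp, ENNReal.ofReal_mul (gaussianPDFReal_nonneg ..),
      ENNReal.ofReal_mul (gaussianPDFReal_nonneg ..)]
    rfl
  have hmeas (m : ℝ) := measurable_gaussianPDF m v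
  have hplane : ∫⁻ z : ℝ × ℝ, gaussianPDF x.1 v z.1 * gaussianPDF x.2.1 v z.2 = 1 := by
    rw [Measure.volume_eq_prod, lintegral_prod_mul (hmeas _).aemeasurable (hmeas _).aemeasurable,
      lintegral_gaussianPDF_eq_one _ hv, lintegral_gaussianPDF_eq_one _ hv, one_mul]
  rw [lintegral_ρG (by unfold gaussianG; fun_prop)]
  simp only [hfactor]
  simp only [lintegral_const_mul _ (by fun_prop : Measurable fun z : ℝ × ℝ =>
    gaussianPDF x.1 v z.1 * gaussianPDF x.2.1 v z.2), hplane, mul_one]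
  exact lintegral_gaussianPDF_eq_one _ hv

theorem gaussianG_eq (x : G) (v : ℝ≥0) (y : G) :
    gaussianG x v y = (√(2 * π * v) ^ 3)⁻¹ * exp (-((log x.2.2 - log y.2.2) ^ 2 +
      ((x.1 - y.1) ^ 2 + (x.2.1 - y.2.1) ^ 2)) / (2 * v)) := by
  have hexp : exp (-((log x.2.2 - log y.2.2) ^ 2 +
        ((x.1 - y.1) ^ 2 + (x.2.1 - y.2.1) ^ 2)) / (2 * v))
      = exp (-(log y.2.2 - log x.2.2) ^ 2 / (2 * v)) *
        (exp (-(y.1 - x.1) ^ 2 / (2 * v)) * exp (-(y.2.1 - x.2.1) ^ 2 / (2 * v))) := by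
    rw [← exp_add, ← exp_add]
    ring_nf
  simp only [gaussianG, gaussianPDFReal, hexp]
  ring

theorem cosh_sub_one_le (r : ℝ) : cosh r - 1 ≤ cosh r * (r ^ 2 / 2) := by
  have hlog : log (cosh r) ≤ r ^ 2 / 2 :=
    (log_le_iff_le_exp (cosh_pos r)).2 (cosh_le_exp_half_sq r)
  have hinv := (one_sub_inv_le_log_of_pos (cosh_pos r)).trans hlog
  have := mul_le_mul_of_nonneg_left hinv (cosh_pos r).le
  rwa [mul_sub, mul_one, mul_inv_cancel₀ (cosh_pos r).ne'] at this

theorem planar_sq_le_distQuad_mul (hx : 0 < x.2.2) (hy : 0 < y.2.2) :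
    (x.1 - y.1) ^ 2 + (x.2.1 - y.2.1) ^ 2 ≤ distQuad x y * (dG x y ^ 2 / 2) := by
  have hcosh := cosh_sub_one_le (dG x y)
  have hone := one_le_cosh (log x.2.2 - log y.2.2)
  have hsplit := distQuad_div_eq_cosh_add hx hy
  rw [← cosh_dG hx hy] at hsplit
  have hdiv : ((x.1 - y.1) ^ 2 + (x.2.1 - y.2.1) ^ 2) / (2 * (x.2.2 * y.2.2))
      ≤ cosh (dG x y) * (dG x y ^ 2 / 2) := by linarith
  rw [div_le_iff₀ (by positivity)] at hdiv
  rw [distQuad_eq hx hy]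
  linarith

theorem log_sq_add_planar_sq_le (hy : y ∈ strip 1) (hloc : y ∈ localSet x) :
    (log x.2.2 - log y.2.2) ^ 2 + ((x.1 - y.1) ^ 2 + (x.2.1 - y.2.1) ^ 2) ≤ 40 * dG x y ^ 2 := by
  have hx := height_pos_of_mem_strip hloc.1
  have hypos := height_pos_of_mem_strip hy
  have hquad : distQuad x y ≤ 78 := by
    have hexp : exp 2 ≤ 7.4 := by
      rw [show (2 : ℝ) = 1 + 1 by norm_num, exp_add]
      nlinarith [exp_one_lt_d9, exp_pos 1]
    have hxheight : x.2.2 ^ 2 ≤ 55 :=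
      (pow_le_pow_left₀ hx.le ((mem_strip.1 hloc.1).2.2.trans hexp) 2).trans (by norm_num)
    have hyheight := abs_le.1 (abs_height_sq_sub_one_le hy)
    have hfst : (x.1 - y.1) ^ 2 ≤ 1 := (sq_le_one_iff_abs_le_one _).2 hloc.2
    have hsnd : |x.2.1 - y.2.1| ≤ 3 := (abs_sub _ _).trans
      (by linarith [(mem_strip.1 hloc.1).1, (mem_strip.1 hy).1])
    have := sq_le_sq.2 (hsnd.trans_eq (abs_of_pos three_pos).symm)
    unfold distQuad
    linarith
  have hheight := sq_le_sq.2 ((abs_log_sub_log_le_dG hx hypos).trans (le_abs_self _))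
  nlinarith [planar_sq_le_distQuad_mul hx hypos, sq_nonneg (dG x y)]

theorem exists_convKernel_le_gaussianG :
    ∃ C > 0, ∀ t > 0, ∀ x y : G, y ∈ strip 1 → y ∈ localSet x →
      convKernel t x y ≤ C * gaussianG x (80 * t).toNNReal y := by
  have hconst := heatConst_pos
  refine ⟨heatConst * exp 3 * √(2 * π * 80) ^ 3, by positivity, fun t ht x y hy hloc => ?_⟩
  have hx := height_pos_of_mem_strip hloc.1
  have hypos := height_pos_of_mem_strip hy
  have hheights : (x.2.2 * y.2.2)⁻¹ ≤ exp 3 := by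
    rw [← exp_log (mul_pos hx hypos), ← exp_neg, log_mul hx.ne' hypos.ne', exp_le_exp]
    linarith [abs_le.1 (abs_log_height_le_of_mem_strip hloc.1),
      abs_le.1 (abs_log_height_le_of_mem_strip hy)]
  have hgauss : exp (-(dG x y ^ 2) / (4 * t)) ≤ exp (-((log x.2.2 - log y.2.2) ^ 2 +
      ((x.1 - y.1) ^ 2 + (x.2.1 - y.2.1) ^ 2)) / (2 * (80 * t))) := by
    rw [exp_le_exp, div_le_div_iff₀ (by positivity) (by positivity)]
    nlinarith [log_sq_add_planar_sq_le hy hloc]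
  have hroot : √(2 * π * (80 * t)) ^ 3 = √(2 * π * 80) ^ 3 * √t ^ 3 := by
    rw [← mul_assoc, sqrt_mul (by positivity), mul_pow]
  calc convKernel t x y ≤ heatConst * (x.2.2 * y.2.2)⁻¹ *
        (t ^ (-(3 : ℝ) / 2) * exp (-(dG x y ^ 2) / (4 * t))) := convKernel_le ht.le hx hypos
    _ ≤ heatConst * exp 3 * ((√t ^ 3)⁻¹ * exp (-((log x.2.2 - log y.2.2) ^ 2 +
        ((x.1 - y.1) ^ 2 + (x.2.1 - y.2.1) ^ 2)) / (2 * (80 * t)))) := by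
      rw [rpow_neg_three_div_two ht.le]
      gcongr
    _ = _ := by
      rw [gaussianG_eq, coe_toNNReal _ (by positivity), hroot]
      field_simp

theorem measurableSet_localSet (x : G) : MeasurableSet (localSet x) :=
  (MeasurableSet.const _).inter <|
    measurableSet_le (f := fun y : G => |x.1 - y.1|) (by fun_prop) measurable_const

theorem exists_setLIntegral_convKernel_le :
    ∃ C > 0, ∀ t > 0, ∀ x : G,
      ∫⁻ y in strip 1 ∩ localSet x, ENNReal.ofReal (convKernel t x y) ∂ρG ≤ ENNReal.ofReal C := by
  obtain ⟨C, hC, hle⟩ := exists_convKernel_le_gaussianG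
  refine ⟨C, hC, fun t ht x => ?_⟩
  have hv : (80 * t).toNNReal ≠ 0 := (toNNReal_pos.2 (by positivity)).ne'
  calc ∫⁻ y in strip 1 ∩ localSet x, ENNReal.ofReal (convKernel t x y) ∂ρG
      ≤ ∫⁻ y, ENNReal.ofReal C * ENNReal.ofReal (gaussianG x (80 * t).toNNReal y) ∂ρG := by
        refine (setLIntegral_mono' ?_ fun y hy => ?_).trans (setLIntegral_le_lintegral _ _)
        · exact (measurableSet_strip 1).inter (measurableSet_localSet x)
        · rw [← ENNReal.ofReal_mul hC.le]
          exact ENNReal.ofReal_le_ofReal (hle t ht x y hy.1 hy.2)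
    _ = ENNReal.ofReal C := by
        rw [lintegral_const_mul' _ _ ENNReal.ofReal_ne_top, lintegral_gaussianG x hv, mul_one]

end Local

section MaximalFunction

/-- The `x`-integrable function that bounds the contribution of the nonlocal part of the kernel to
the maximal function, up to a constant. -/
def tailMajorant (Λ : ℝ → ℝ) (δ : ℝ) (x : G) : ℝ≥0∞ :=
  ∫⁻ y in strip 1, ENNReal.ofReal (Λ y.1 * log (|y.1| + 3) ^ (2 * δ)) *
    ENNReal.ofReal (decayWeight δ x gE + decayWeight δ x y) ∂ρG

variable {f : G → ℝ} {Λ : ℝ → ℝ} {δ K : ℝ}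

theorem measurable_decayWeight (δ : ℝ) :
    Measurable fun p : G × G => decayWeight δ p.1 p.2 := by
  have hplane := measurable_planeWeight δ
  unfold decayWeight heightLog planar
  fun_prop

theorem lintegral_decayWeight (δ : ℝ) (y : G) :
    ∫⁻ x, ENNReal.ofReal (decayWeight δ x y) ∂ρG
      = (∫⁻ s : ℝ, ENNReal.ofReal ((1 + ‖s‖) ^ (-(1 + δ)))) *
        ∫⁻ z, ENNReal.ofReal (planeWeight δ z) := by
  have := measurable_planeWeight δ
  have hfactor (s : ℝ) (z : ℝ × ℝ) : ENNReal.ofReal (decayWeight δ (z.1, z.2, exp s) y)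
      = ENNReal.ofReal ((1 + ‖s‖) ^ (-(1 + δ))) *
        ENNReal.ofReal (planeWeight δ (z - planar y)) := by
    rw [← ENNReal.ofReal_mul (by positivity), decayWeight, heightLog, log_exp, norm_eq_abs]
    rfl
  rw [lintegral_ρG (by exact ((measurable_decayWeight δ).comp (by fun_prop :
    Measurable fun x : G => (x, y))).ennreal_ofReal)]
  simp only [hfactor]
  simp only [lintegral_const_mul' _ _ ENNReal.ofReal_ne_top,
    lintegral_sub_right_eq_self (fun z => ENNReal.ofReal (planeWeight δ z))]
  exact lintegral_mul_const _ (by fun_prop)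

theorem lintegral_decayWeight_lt_top (hδ : 0 < δ) (y : G) :
    ∫⁻ x, ENNReal.ofReal (decayWeight δ x y) ∂ρG < ⊤ := by
  rw [lintegral_decayWeight]
  exact ENNReal.mul_lt_top (finite_integral_one_add_norm (by simpa using hδ))
    (lintegral_planeWeight_lt_top hδ)

theorem lintegral_tailMajorant_lt_top (hδ : 0 < δ) (hΛ : Measurable Λ)
    (hint : ∫⁻ s, ENNReal.ofReal (Λ s * log (|s| + 3) ^ (2 * δ)) < ⊤) :
    ∫⁻ x, tailMajorant Λ δ x ∂ρG < ⊤ := by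
  have hweight := measurable_decayWeight δ
  have hslice (y : G) : Measurable fun x => decayWeight δ x y :=
    hweight.comp (by fun_prop : Measurable fun x : G => (x, y))
  have hinner (y : G) : ∫⁻ x, ENNReal.ofReal (decayWeight δ x gE + decayWeight δ x y) ∂ρG
      = 2 * ∫⁻ x, ENNReal.ofReal (decayWeight δ x gE) ∂ρG := by
    simp only [ENNReal.ofReal_add (decayWeight_nonneg δ _ _) (decayWeight_nonneg δ _ _)]
    rw [lintegral_add_left (by exact (hslice gE).ennreal_ofReal), lintegral_decayWeight δ y,
      ← lintegral_decayWeight δ gE, two_mul]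
  have : Measurable fun p : G × G => decayWeight δ p.1 gE + decayWeight δ p.1 p.2 :=
    ((hslice gE).comp measurable_fst).add hweight
  unfold tailMajorant
  rw [lintegral_lintegral_swap (by unfold Function.uncurry; fun_prop)]
  simp only [lintegral_const_mul' _ _ ENNReal.ofReal_ne_top, hinner]
  rw [lintegral_mul_const _ (by fun_prop)]
  exact ENNReal.mul_lt_top
    (setLIntegral_strip_lt_top 1
      (F := fun s => ENNReal.ofReal (Λ s * log (|s| + 3) ^ (2 * δ))) (by fun_prop) hint)
    (ENNReal.mul_lt_top ENNReal.ofNat_lt_top (lintegral_decayWeight_lt_top hδ gE))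

theorem integrable_of_abs_le_on_strip (hf : Measurable f) (hsupp : f.support ⊆ strip 1)
    (hΛ : Measurable Λ) (hfΛ : ∀ y ∈ strip 1, |f y| ≤ Λ y.1)
    (hint : ∫⁻ s, ENNReal.ofReal (Λ s) < ⊤) : Integrable f ρG := by
  refine ⟨hf.aestronglyMeasurable, ?_⟩
  calc ∫⁻ y, ‖f y‖ₑ ∂ρG = ∫⁻ y in strip 1, ‖f y‖ₑ ∂ρG :=
        (setLIntegral_eq_of_support_subset (by simpa [Function.support] using hsupp)).symm
    _ ≤ ∫⁻ y in strip 1, ENNReal.ofReal (Λ y.1) ∂ρG :=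
        setLIntegral_mono' (measurableSet_strip 1) fun y hy => by
          rw [enorm_eq_ofReal_abs]
          exact ENNReal.ofReal_le_ofReal (hfΛ y hy)
    _ < ⊤ := setLIntegral_strip_lt_top 1 hΛ.ennreal_ofReal hint

theorem ofReal_abs_convHeat_le (hf : Measurable f) (hfint : Integrable f ρG)
    (hzero : ∫ y, f y ∂ρG = 0) (t c : ℝ) {x : G} (hx : 0 < x.2.2) :
    ENNReal.ofReal |convHeat f t x|
      ≤ ∫⁻ y, ENNReal.ofReal (|f y| * |convKernel t x y - c|) ∂ρG := by
  rw [convHeat_eq_integral_convKernel hf t hx]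
  by_cases hprod : Integrable (fun y => f y * convKernel t x y) ρG
  · have hcancel : ∫ y, f y * convKernel t x y ∂ρG = ∫ y, f y * (convKernel t x y - c) ∂ρG := by
      simp only [mul_sub]
      rw [integral_sub hprod (hfint.mul_const c), integral_mul_const, hzero, zero_mul, sub_zero]
    rw [hcancel, ← enorm_eq_ofReal_abs]
    refine (enorm_integral_le_lintegral_enorm _).trans_eq ?_
    simp only [enorm_eq_ofReal_abs, abs_mul]
  · rw [integral_undef hprod, abs_zero, ENNReal.ofReal_zero]
    exact bot_le

theorem exists_setLIntegral_local_le (hΛ : ∀ s, 0 ≤ Λ s)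
    (hcomp : ∀ u v, |u - v| ≤ 1 → Λ v ≤ K * Λ u) :
    ∃ C > 0, ∀ t > 0, ∀ x : G,
      ∫⁻ y in strip 1 ∩ localSet x, ENNReal.ofReal (Λ y.1 * convKernel t x y) ∂ρG
        ≤ ENNReal.ofReal C * (strip 2).indicator (fun x => ENNReal.ofReal (K * Λ x.1)) x := by
  obtain ⟨C, hC, hkernel⟩ := exists_setLIntegral_convKernel_le
  refine ⟨C, hC, fun t ht x => ?_⟩
  by_cases hx : x ∈ strip 2
  · rw [indicator_of_mem hx, mul_comm]
    have hmeas := (measurableSet_strip 1).inter (measurableSet_localSet x)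
    calc ∫⁻ y in strip 1 ∩ localSet x, ENNReal.ofReal (Λ y.1 * convKernel t x y) ∂ρG
        ≤ ∫⁻ y in strip 1 ∩ localSet x,
            ENNReal.ofReal (K * Λ x.1) * ENNReal.ofReal (convKernel t x y) ∂ρG := by
          refine setLIntegral_mono' hmeas fun y hy => ?_
          rw [ENNReal.ofReal_mul (hΛ _)]
          gcongr
          exact hcomp _ _ hy.2.2
      _ ≤ ENNReal.ofReal (K * Λ x.1) * ENNReal.ofReal C := by
          rw [lintegral_const_mul' _ _ ENNReal.ofReal_ne_top]
          gcongr
          exact hkernel t ht x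
  · have : localSet x = ∅ := eq_empty_of_forall_notMem fun y hy => hx hy.1
    simp [this]

theorem exists_setLIntegral_tail_le (hΛ : ∀ s, 0 ≤ Λ s) (hδ : 0 ≤ δ) (hδ' : δ ≤ 1 / 2) :
    ∃ C > 0, ∀ t > 0, ∀ x : G, 0 < x.2.2 →
      ∫⁻ y in strip 1, ENNReal.ofReal (Λ y.1 * |tailKernel t x y - tailKernel t x gE|) ∂ρG
        ≤ ENNReal.ofReal C * tailMajorant Λ δ x := by
  obtain ⟨C, hC, hkernel⟩ := exists_abs_tailKernel_sub_le hδ hδ'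
  refine ⟨C, hC, fun t ht x hx => ?_⟩
  rw [tailMajorant, ← lintegral_const_mul' _ _ ENNReal.ofReal_ne_top]
  refine setLIntegral_mono' (measurableSet_strip 1) fun y hy => ?_
  have hw := add_nonneg (decayWeight_nonneg δ x gE) (decayWeight_nonneg δ x y)
  rw [← ENNReal.ofReal_mul' hw, ← ENNReal.ofReal_mul hC.le]
  refine ENNReal.ofReal_le_ofReal ?_
  calc Λ y.1 * |tailKernel t x y - tailKernel t x gE|
      ≤ Λ y.1 * (C * (log (|y.1| + 3) ^ (2 * δ) * (decayWeight δ x gE + decayWeight δ x y))) :=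
        mul_le_mul_of_nonneg_left (hkernel t ht x y hx hy) (hΛ _)
    _ = _ := by ring

theorem abs_convKernel_sub_tailKernel_le {t : ℝ} (ht : 0 ≤ t) {x y : G} (hx : 0 < x.2.2)
    (hy : 0 < y.2.2) :
    |convKernel t x y - tailKernel t x gE| ≤
      (localSet x).indicator (convKernel t x) y + |tailKernel t x y - tailKernel t x gE| := by
  have hsplit := congrFun (indicator_self_add_compl (localSet x) (convKernel t x)) y
  have hlocal : 0 ≤ (localSet x).indicator (convKernel t x) y :=
    indicator_apply_nonneg fun _ => convKernel_nonneg ht hx hy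
  calc |convKernel t x y - tailKernel t x gE|
      = |(localSet x).indicator (convKernel t x) y + (tailKernel t x y - tailKernel t x gE)| := by
        rw [← add_sub_assoc]
        exact congrArg (fun k => |k - tailKernel t x gE|) hsplit.symm
    _ ≤ _ := (abs_add_le _ _).trans_eq (by rw [abs_of_nonneg hlocal])

theorem setLIntegral_mul_kernel_sub_le (hΛm : Measurable Λ) (hΛ : ∀ s, 0 ≤ Λ s) {t : ℝ}
    (ht : 0 ≤ t) {x : G} (hx : 0 < x.2.2) :
    ∫⁻ y in strip 1, ENNReal.ofReal (Λ y.1 * |convKernel t x y - tailKernel t x gE|) ∂ρG ≤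
      ∫⁻ y in strip 1 ∩ localSet x, ENNReal.ofReal (Λ y.1 * convKernel t x y) ∂ρG +
        ∫⁻ y in strip 1, ENNReal.ofReal (Λ y.1 * |tailKernel t x y - tailKernel t x gE|) ∂ρG := by
  have hkernel := measurable_convKernel t x
  rw [inter_comm, ← setLIntegral_indicator (measurableSet_localSet x), ← lintegral_add_left
    ((by fun_prop : Measurable _).indicator (measurableSet_localSet x))]
  refine setLIntegral_mono' (measurableSet_strip 1) fun y hy => ?_
  refine (ENNReal.ofReal_le_ofReal (mul_le_mul_of_nonneg_left
    (abs_convKernel_sub_tailKernel_le ht hx (height_pos_of_mem_strip hy)) (hΛ _))).trans ?_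
  rw [mul_add]
  refine ENNReal.ofReal_add_le.trans_eq ?_
  congr 1
  by_cases hy : y ∈ localSet x <;> simp [hy]

theorem exists_maxHeat_le (hf : Measurable f) (hsupp : f.support ⊆ strip 1)
    (hfint : Integrable f ρG) (hzero : ∫ y, f y ∂ρG = 0) (hΛm : Measurable Λ)
    (hΛ : ∀ s, 0 ≤ Λ s) (hcomp : ∀ u v, |u - v| ≤ 1 → Λ v ≤ K * Λ u)
    (hfΛ : ∀ y ∈ strip 1, |f y| ≤ Λ y.1) (hδ : 0 ≤ δ) (hδ' : δ ≤ 1 / 2) :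
    ∃ A B : ℝ, ∀ x : G, 0 < x.2.2 → maxHeat f x ≤
      ENNReal.ofReal A * (strip 2).indicator (fun x => ENNReal.ofReal (K * Λ x.1)) x +
        ENNReal.ofReal B * tailMajorant Λ δ x := by
  obtain ⟨A, -, hlocal⟩ := exists_setLIntegral_local_le hΛ hcomp
  obtain ⟨B, -, htail⟩ := exists_setLIntegral_tail_le hΛ hδ hδ'
  refine ⟨A, B, fun x hx => iSup₂_le fun t ht => ?_⟩
  -- The mean of `f` vanishes, so the constant `tailKernel t x gE` may be subtracted for free.
  calc ENNReal.ofReal |convHeat f t x|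
      ≤ ∫⁻ y, ENNReal.ofReal (|f y| * |convKernel t x y - tailKernel t x gE|) ∂ρG :=
        ofReal_abs_convHeat_le hf hfint hzero t _ hx
    _ = ∫⁻ y in strip 1, ENNReal.ofReal (|f y| * |convKernel t x y - tailKernel t x gE|) ∂ρG :=
        (setLIntegral_eq_of_support_subset fun y hy => hsupp fun h => hy (by simp [h])).symm
    _ ≤ ∫⁻ y in strip 1, ENNReal.ofReal (Λ y.1 * |convKernel t x y - tailKernel t x gE|) ∂ρG :=
        setLIntegral_mono' (measurableSet_strip 1) fun y hy =>
          ENNReal.ofReal_le_ofReal (mul_le_mul_of_nonneg_right (hfΛ y hy) (abs_nonneg _))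
    _ ≤ _ := setLIntegral_mul_kernel_sub_le hΛm hΛ ht.le hx
    _ ≤ _ := add_le_add (hlocal t ht x) (htail t ht x hx)

theorem lintegral_maxHeat_lt_top_of_abs_le_on_strip (hf : Measurable f)
    (hsupp : f.support ⊆ strip 1) (hzero : ∫ y, f y ∂ρG = 0) (hΛm : Measurable Λ)
    (hfΛ : ∀ y ∈ strip 1, |f y| ≤ Λ y.1)
    (hcomp : ∀ u v, |u - v| ≤ 1 → Λ v ≤ K * Λ u) (hδ : 0 < δ) (hδ' : δ ≤ 1 / 2)
    (hint : ∫⁻ s, ENNReal.ofReal (Λ s * log (|s| + 3) ^ (2 * δ)) < ⊤) :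
    ∫⁻ x, maxHeat f x ∂ρG < ⊤ := by
  have hΛ (s : ℝ) : 0 ≤ Λ s :=
    (abs_nonneg _).trans (hfΛ (s, 0, 1) (mem_strip.2 (by simp)))
  have hΛint : ∫⁻ s, ENNReal.ofReal (Λ s) < ⊤ :=
    (lintegral_mono fun s => ENNReal.ofReal_le_ofReal (le_mul_of_one_le_right (hΛ s)
      (one_le_rpow (one_lt_log_abs_add_three s).le (by positivity)))).trans_lt hint
  have hfint := integrable_of_abs_le_on_strip hf hsupp hΛm hfΛ hΛint
  obtain ⟨A, B, hmax⟩ := exists_maxHeat_le hf hsupp hfint hzero hΛm hΛ hcomp hfΛ hδ.le hδ'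
  refine (lintegral_mono_ae (ae_ρG_height_pos.mono hmax)).trans_lt ?_
  have hlocal : Measurable fun x : G => ENNReal.ofReal (K * Λ x.1) := by fun_prop
  have hlocal_int : ∫⁻ x in strip 2, ENNReal.ofReal (K * Λ x.1) ∂ρG < ⊤ := by
    simp only [ENNReal.ofReal_mul' (hΛ _), lintegral_const_mul' _ _ ENNReal.ofReal_ne_top]
    exact ENNReal.mul_lt_top ENNReal.ofReal_lt_top
      (setLIntegral_strip_lt_top 2 hΛm.ennreal_ofReal hΛint)
  rw [lintegral_add_left ((hlocal.indicator (measurableSet_strip 2)).const_mul _),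
    lintegral_const_mul' _ _ ENNReal.ofReal_ne_top, lintegral_const_mul' _ _ ENNReal.ofReal_ne_top,
    lintegral_indicator (measurableSet_strip 2)]
  exact ENNReal.add_lt_top.2 ⟨ENNReal.mul_lt_top ENNReal.ofReal_lt_top hlocal_int,
    ENNReal.mul_lt_top ENNReal.ofReal_lt_top (lintegral_tailMajorant_lt_top hδ hΛm hint)⟩

end MaximalFunction

section SpecialFunction

theorem R0set_subset_strip : R0set ⊆ strip 1 := prod_mono_left (subset_univ _)

theorem domSpecial_subset_strip : domSpecial ⊆ strip 1 := fun _ h =>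
  mem_strip.2 ⟨h.2.1.le, h.2.2.1.le, h.2.2.2.le⟩

theorem measurable_fSpecial (c0 : ℝ) : Measurable (fSpecial c0) := by
  have hdom : MeasurableSet domSpecial := by
    unfold domSpecial
    measurability
  have hR0 : MeasurableSet R0set :=
    measurableSet_Icc.prod (measurableSet_Icc.prod measurableSet_Icc)
  exact ((by fun_prop : Measurable _).indicator hdom).add (measurable_const.indicator hR0)

theorem support_fSpecial_subset (c0 : ℝ) : (fSpecial c0).support ⊆ strip 1 :=
  (Function.support_add _ _).trans
    (union_subset (support_indicator_subset.trans domSpecial_subset_strip)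
      (support_indicator_subset.trans R0set_subset_strip))

theorem inv_mul_log_rpow_le {p s : ℝ} (hp : 0 ≤ p) (hs : 3 ≤ s) :
    (s * log s ^ p)⁻¹ ≤ 2 ^ (1 + p) * logTail p s := by
  have h := logTail_le_of_le (u := s) (v := s - 3) hp
    (by rw [abs_of_nonneg (by linarith), abs_of_nonneg (by linarith)]; linarith)
  rwa [logTail, abs_of_nonneg (by linarith), sub_add_cancel] at h

theorem exists_abs_fSpecial_le (c0 : ℝ) :
    ∃ C > 0, ∀ y, |fSpecial c0 y| ≤ C * logTail (3 / 2) y.1 := by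
  have hzero := logTail_pos (3 / 2) 0
  have hdom (y : G) : |domSpecial.indicator (fun y => (y.1 * log y.1 ^ (3 / 2 : ℝ))⁻¹) y|
      ≤ 2 ^ (1 + 3 / 2 : ℝ) * logTail (3 / 2) y.1 := by
    have hy := logTail_pos (3 / 2) y.1
    by_cases h : y ∈ domSpecial
    · have hfst : 3 < y.1 := h.1
      have hlog := log_pos (by linarith : 1 < y.1)
      rw [indicator_of_mem h, abs_of_nonneg (by positivity)]
      exact inv_mul_log_rpow_le (by norm_num) hfst.le
    · simp only [indicator_of_notMem h, abs_zero]
      positivity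
  have hR0 (y : G) : |R0set.indicator (fun _ => c0) y|
      ≤ |c0| / logTail (3 / 2) 0 * 2 ^ (1 + 3 / 2 : ℝ) * logTail (3 / 2) y.1 := by
    have hy := logTail_pos (3 / 2) y.1
    by_cases h : y ∈ R0set
    · have hfst : |y.1| ≤ 1 := abs_le.2 h.1
      rw [indicator_of_mem h, mul_assoc, div_mul_eq_mul_div, le_div_iff₀ hzero]
      exact mul_le_mul_of_nonneg_left (logTail_le_of_le (by norm_num) (by simp; linarith))
        (abs_nonneg _)
    · simp only [indicator_of_notMem h, abs_zero]
      positivity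
  refine ⟨2 ^ (1 + 3 / 2 : ℝ) + |c0| / logTail (3 / 2) 0 * 2 ^ (1 + 3 / 2 : ℝ),
    by positivity, fun y => (abs_add_le _ _).trans ?_⟩
  rw [add_mul]
  exact add_le_add (hdom y) (hR0 y)

end SpecialFunction

theorem maxHeat_fSpecial_L1 :
    ∀ c0 : ℝ, (∫ x, fSpecial c0 x ∂ρG) = 0 →
      (∫⁻ x, maxHeat (fSpecial c0) x ∂ρG) < ⊤ := by
  intro c0 hzero
  obtain ⟨C, hC, hbound⟩ := exists_abs_fSpecial_le c0
  have hmeas := measurable_logTail (3 / 2)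
  refine lintegral_maxHeat_lt_top_of_abs_le_on_strip (Λ := fun s => C * logTail (3 / 2) s)
    (K := 2 ^ (1 + 3 / 2 : ℝ)) (δ := 1 / 8) (measurable_fSpecial c0) (support_fSpecial_subset c0)
    hzero (by fun_prop) (fun y _ => hbound y) (fun u v huv => ?_) (by norm_num) (by norm_num) ?_
  · have huv' : |u| + 3 ≤ 2 * (|v| + 3) := by
      linarith [abs_sub_abs_le_abs_sub u v, abs_nonneg v]
    rw [mul_left_comm]
    exact mul_le_mul_of_nonneg_left (logTail_le_of_le (by norm_num) huv') hC.le
  · simp only [mul_assoc, logTail_mul_rpow, ENNReal.ofReal_mul hC.le,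
      lintegral_const_mul' _ _ ENNReal.ofReal_ne_top]
    exact ENNReal.mul_lt_top ENNReal.ofReal_lt_top (lintegral_logTail_lt_top (by norm_num))
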